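/- arXiv:2506.01740 — 5 statements merged into one kernel-verified Lean document; each statement's English description precedes it below -/
import Mathlib

section
/- Let A be a commutative ring and I ⊆ A an ideal. Let M be a finitely presented A-module. Then M is a finitely generated projective A-module if and only if the following conditions hold: (b) the A/I-module M/IM is flat and the canonical map I ⊗_A M → M is injective (equivalently, Tor₁^A(A/I, M) = 0); (c) for every prime ideal 𝔭 of A with I ⊄ 𝔭, the localized module M_𝔭 is a flat A_𝔭-module. -/
open scoped TensorProduct
open Function

/-- Injectivity of `P ⊗[B] (B ⊗[A] f)` only depends on `P ⊗[A] f`. -/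
theorem lTensor_baseChange_injective_iff {A B : Type*} [CommRing A] [CommRing B] [Algebra A B]
    {N₁ N₂ P : Type*} [AddCommGroup N₁] [Module A N₁] [AddCommGroup N₂] [Module A N₂]
    [AddCommGroup P] [Module A P] [Module B P] [IsScalarTower A B P] (f : N₁ →ₗ[A] N₂) :
    Injective ((f.baseChange B).lTensor P) ↔ Injective (f.lTensor P) := by
  let e₁ := TensorProduct.AlgebraTensorModule.cancelBaseChange A B B P N₁
  let e₂ := TensorProduct.AlgebraTensorModule.cancelBaseChange A B B P N₂
  have h : (TensorProduct.AlgebraTensorModule.lTensor B P f) ∘ₗ e₁.toLinearMap =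
      e₂.toLinearMap ∘ₗ (f.baseChange B).lTensor P := by
    ext
    simp [e₁, e₂]
  have h' : f.lTensor P ∘ e₁ = e₂ ∘ (f.baseChange B).lTensor P := congrArg DFunLike.coe h
  rw [← e₂.injective.of_comp_iff, ← h', Injective.of_comp_iff' _ e₁.bijective]

/-- Local freeness along `V(I)`: if `M/IM` is flat over `A/I` and `I ⊗ M → M` is injective, then
a finitely presented module `M` is free at every prime containing `I`. -/
theorem free_localizedModule_of_le {A M : Type*} [CommRing A] [AddCommGroup M] [Module A M]
    [Module.FinitePresentation A M] (I : Ideal A) [Module.Flat (A ⧸ I) ((A ⧸ I) ⊗[A] M)]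
    (hI : Injective (I.subtype.rTensor M)) (p : Ideal A) [p.IsPrime] (hp : I ≤ p) :
    Module.Free (Localization.AtPrime p) (LocalizedModule p.primeCompl M) := by
  obtain ⟨n, K, e, hK⟩ := Module.FinitePresentation.exists_fin A M
  have : Module.Finite A K := .of_fg hK
  let g : (Fin n → A) →ₗ[A] M := e.symm.toLinearMap ∘ₗ K.mkQ
  have hg : Surjective g := e.symm.surjective.comp K.mkQ_surjective
  have hKg : Exact K.subtype g :=
    (LinearMap.exact_subtype_mkQ K).comp_injective _ e.symm.injective (map_zero e.symm)
  have hquot : Injective (K.subtype.lTensor (A ⧸ I)) :=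
    lTensor_injective_of_exact_of_exact_of_rTensor_injective
      (LinearMap.exact_subtype_mkQ I) I.mkQ_surjective hKg hg hI
      (Module.Flat.lTensor_preserves_injective_linearMap _ K.subtype_injective)
  let : Algebra (A ⧸ I) p.ResidueField :=
    (Ideal.Quotient.lift I (algebraMap A p.ResidueField)
      fun a ha ↦ Ideal.algebraMap_residueField_eq_zero.mpr (hp ha)).toAlgebra
  have : IsScalarTower A (A ⧸ I) p.ResidueField := .of_algebraMap_eq fun _ ↦ rfl
  have hres : Injective (K.subtype.lTensor p.ResidueField) := by
    rw [← lTensor_baseChange_injective_iff (B := A ⧸ I)]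
    exact LinearMap.lTensor_injective_of_exact_of_flat (g.baseChange (A ⧸ I))
      (g.lTensor_surjective _ hg) _ hquot (lTensor_exact (A ⧸ I) hKg hg) _
  have : Module.Free (Localization.AtPrime p) (Localization.AtPrime p ⊗[A] M) :=
    Module.free_of_lTensor_residueField_injective
      (K.subtype.baseChange (Localization.AtPrime p)) (g.baseChange (Localization.AtPrime p))
      (g.lTensor_surjective _ hg) (lTensor_exact (Localization.AtPrime p) hKg hg)
      ((lTensor_baseChange_injective_iff K.subtype).mpr hres)
  exact .of_equiv (LocalizedModule.equivTensorProduct p.primeCompl M).symm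

/-- **Flatness criterion** (Proposition `FlatnessCrit`): for a finitely presented module `M`
over a commutative ring `A` and an ideal `I ⊆ A`, the module `M` is finitely generated
projective if and only if (b) `M/IM ≅ (A/I) ⊗[A] M` is a flat `A/I`-module and the canonical map
`I ⊗[A] M → M` is injective, and (c) for every prime `𝔭` of `A` not containing `I`, the
localization `M_𝔭` is a flat `A_𝔭`-module. -/
theorem flatness_criterion {A : Type} [CommRing A] (I : Ideal A)
    (M : Type) [AddCommGroup M] [Module A M] [Module.FinitePresentation A M] :
    (Module.Finite A M ∧ Module.Projective A M) ↔
      ((Module.Flat (A ⧸ I) ((A ⧸ I) ⊗[A] M) ∧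
          Function.Injective (TensorProduct.lift ((LinearMap.lsmul A M).comp I.subtype))) ∧
        ∀ (p : Ideal A) [p.IsPrime], ¬ I ≤ p →
          Module.Flat (Localization.AtPrime p) (LocalizedModule p.primeCompl M)) := by
  have hlift : TensorProduct.lift ((LinearMap.lsmul A M).comp I.subtype) =
      (TensorProduct.lid A M).toLinearMap ∘ₗ I.subtype.rTensor M := by
    ext
    simp
  rw [hlift, LinearMap.coe_comp, LinearEquiv.coe_coe,
    (TensorProduct.lid A M).injective.of_comp_iff]
  constructor
  · rintro ⟨-, _⟩
    exact ⟨⟨inferInstance, Module.Flat.rTensor_preserves_injective_linearMap _ I.subtype_injective⟩,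
      fun p _ _ ↦ .of_isLocalizedModule _ p.primeCompl (LocalizedModule.mkLinearMap _ _)⟩
  · rintro ⟨⟨_, hI⟩, hloc⟩
    have : Module.Flat A M := by
      refine Module.flat_of_localized_maximal M fun p _ ↦ ?_
      have : Module.Flat (Localization.AtPrime p) (LocalizedModule p.primeCompl M) := by
        by_cases hp : I ≤ p
        · have := free_localizedModule_of_le I hI p hp
          infer_instance
        · exact hloc p hp
      exact .trans A (Localization.AtPrime p) _
    exact ⟨inferInstance, Module.Flat.projective_of_finitePresentation⟩
end

section
/- Let A be a commutative ring and I an ideal contained in the Jacobson radical of A. Let M be a finitely presented A-module such that the A/I-module M/IM is flat and the canonical map I ⊗_A M → M is injective (equivalently Tor₁^A(A/I, M) = 0). Then M is a finitely generated projective A-module. -/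
open scoped TensorProduct

/-- If `f : F → M` is a surjection from a flat module and `I ⊗ M → M` is injective, then the
inclusion of the kernel of `f` into `F` stays injective modulo `I`. -/
theorem lTensor_quotient_ker_subtype_injective {A F M : Type*} [CommRing A] [AddCommGroup F]
    [Module A F] [Module.Flat A F] [AddCommGroup M] [Module A M] (I : Ideal A)
    (f : F →ₗ[A] M) (hf : Function.Surjective f)
    (h : Function.Injective (TensorProduct.lift ((LinearMap.lsmul A M).comp I.subtype))) :
    Function.Injective ((LinearMap.ker f).subtype.lTensor (A ⧸ I)) := by
  refine lTensor_injective_of_exact_of_exact_of_rTensor_injective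
    (f₁ := I.subtype) (f₂ := I.mkQ) (LinearMap.exact_subtype_mkQ I) I.mkQ_surjective
    (LinearMap.exact_subtype_ker_map f) hf ?_
    (Module.Flat.lTensor_preserves_injective_linearMap _ (Submodule.injective_subtype _))
  have key : TensorProduct.lift ((LinearMap.lsmul A M).comp I.subtype) =
      (TensorProduct.lid A M).toLinearMap ∘ₗ I.subtype.rTensor M := by
    ext; simp
  rw [key, LinearMap.coe_comp] at h
  exact h.of_comp

/-- A linear endomorphism of a finite module that is the identity modulo an ideal contained in the
Jacobson radical is bijective. -/
theorem bijective_of_sub_mem_smul_top {A K : Type*} [CommRing A] [AddCommGroup K] [Module A K]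
    [Module.Finite A K] {I : Ideal A} (hI : I ≤ Ideal.jacobson ⊥) (φ : K →ₗ[A] K)
    (hφ : ∀ k, k - φ k ∈ I • (⊤ : Submodule A K)) : Function.Bijective φ := by
  refine OrzechProperty.bijective_of_surjective_endomorphism φ (LinearMap.range_eq_top.mp ?_)
  refine top_le_iff.mp (Submodule.le_of_le_smul_of_le_jacobson_bot Module.Finite.fg_top hI ?_)
  intro k _
  rw [← add_sub_cancel (φ k) k]
  exact Submodule.add_mem_sup (LinearMap.mem_range_self φ k) (hφ k)

/-- **Flatness criterion, Jacobson-radical case** (Remark following `FlatnessCrit`):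
if `I` is contained in the Jacobson radical of `A`, `M` is a finitely presented `A`-module such
that `M/IM ≅ (A/I) ⊗[A] M` is flat over `A/I` and the canonical map `I ⊗[A] M → M` is injective,
then `M` is a finitely generated projective `A`-module. -/
theorem flatness_criterion_jacobson {A : Type} [CommRing A] (I : Ideal A)
    (hI : I ≤ Ideal.jacobson (⊥ : Ideal A))
    (M : Type) [AddCommGroup M] [Module A M] [Module.FinitePresentation A M]
    (h1 : Module.Flat (A ⧸ I) ((A ⧸ I) ⊗[A] M))
    (h2 : Function.Injective (TensorProduct.lift ((LinearMap.lsmul A M).comp I.subtype))) :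
    Module.Finite A M ∧ Module.Projective A M := by
  refine ⟨inferInstance, ?_⟩
  obtain ⟨n, f, hf⟩ := Module.Finite.exists_fin' A M
  have : Module.Finite A (LinearMap.ker f) := .of_fg (Module.FinitePresentation.fg_ker f hf)
  have : Module.Projective (A ⧸ I) ((A ⧸ I) ⊗[A] M) := Module.Flat.projective_of_finitePresentation
  let ι := (LinearMap.ker f).subtype
  have hι : Function.Exact ι f := LinearMap.exact_subtype_ker_map f
  have hfI : Function.Surjective (f.baseChange (A ⧸ I)) := f.lTensor_surjective _ hf
  -- The reduced sequence splits since its cokernel is projective.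
  obtain ⟨l, hl⟩ := ((Function.Exact.split_tfae (f := ι.baseChange (A ⧸ I))
    (g := f.baseChange (A ⧸ I)) (lTensor_exact _ hι hf)
    (lTensor_quotient_ker_subtype_injective I f hf h2) hfI).out 0 1).mp
    (Module.projective_lifting_property _ _ hfI)
  -- Lift the retraction to `A`; it is a retraction of `ι` up to an automorphism of `ker f`.
  obtain ⟨r, hr⟩ := Module.projective_lifting_property
    (TensorProduct.mk A (A ⧸ I) (LinearMap.ker f) 1)
    (l.restrictScalars A ∘ₗ TensorProduct.mk A (A ⧸ I) (Fin n → A) 1)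
    (TensorProduct.mk_surjective A _ _ Ideal.Quotient.mk_surjective)
  have hbij : Function.Bijective (r ∘ₗ ι) := by
    refine bijective_of_sub_mem_smul_top hI _ fun k ↦ ?_
    have hk : (1 : A ⧸ I) ⊗ₜ[A] r (ι k) = 1 ⊗ₜ k :=
      (LinearMap.congr_fun hr (ι k)).trans (LinearMap.congr_fun hl (1 ⊗ₜ k))
    have := congrArg (TensorProduct.quotTensorEquivQuotSMul (LinearMap.ker f) I) hk.symm
    simpa [TensorProduct.quotTensorEquivQuotSMul_mk_one_tmul, Submodule.Quotient.eq] using this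
  let e := LinearEquiv.ofBijective (r ∘ₗ ι) hbij
  have hsplit : ∃ l, l ∘ₗ ι = LinearMap.id :=
    ⟨e.symm.toLinearMap ∘ₗ r, LinearMap.ext fun k ↦ e.symm_apply_apply k⟩
  obtain ⟨s, hs⟩ :=
    ((Function.Exact.split_tfae hι (Submodule.injective_subtype _) hf).out 0 1).mpr hsplit
  exact .of_split s f hs
end

section
/- Let A be a commutative ring, I ⊆ A an ideal, B a commutative A-algebra of finite presentation, and M a finitely presented B-module. Assume: (a) the A/I-module M/IM is flat and the canonical map I ⊗_A M → M is injective (equivalently Tor₁^A(A/I, M) = 0); (b) for every prime ideal 𝔮 of B whose contraction 𝔭 to A does not contain I, the localized module M_𝔮 is a flat A_𝔭-module. Then M is a flat A-module. -/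
open scoped TensorProduct

section Relations

variable {A F M : Type*} [CommRing A] [AddCommGroup F] [Module A F] [AddCommGroup M] [Module A M]

/-- The multiplication map `J ⊗ N → N` has image `J • N`, also for a submodule `N` of `F`. -/
theorem exists_lTensor_subtype_of_mem_smul (J : Ideal A) (N : Submodule A F) {x : F}
    (hx : x ∈ J • N) :
    ∃ t : J ⊗[A] N, TensorProduct.lift ((LinearMap.lsmul A F).comp J.subtype)
      (N.subtype.lTensor J t) = x := by
  induction hx using Submodule.smul_induction_on' with
  | smul r hr n hn => exact ⟨⟨r, hr⟩ ⊗ₜ ⟨n, hn⟩, by simp⟩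
  | add x _ y _ hx hy =>
    obtain ⟨t, rfl⟩ := hx
    obtain ⟨u, rfl⟩ := hy
    exact ⟨t + u, by simp⟩

theorem lift_lTensor_subtype_mem_smul (J : Ideal A) (N : Submodule A F) (t : J ⊗[A] N) :
    TensorProduct.lift ((LinearMap.lsmul A F).comp J.subtype) (N.subtype.lTensor J t) ∈ J • N := by
  induction t with
  | zero => simp
  | tmul r n => simpa using Submodule.smul_mem_smul r.2 n.2
  | add t u ht hu => simpa using add_mem ht hu

theorem lift_lsmul_lTensor (J : Ideal A) (π : F →ₗ[A] M) (t : J ⊗[A] F) :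
    TensorProduct.lift ((LinearMap.lsmul A M).comp J.subtype) (π.lTensor J t) =
      π (TensorProduct.lift ((LinearMap.lsmul A F).comp J.subtype) t) := by
  induction t with
  | zero => simp
  | tmul r n => simp
  | add t u ht hu => simp [ht, hu]

/-- If `J ⊗ M → M` is injective and `M = F / L`, then `L ∩ J F ⊆ J L`. -/
theorem mem_smul_ker_of_injective {J : Ideal A} {π : F →ₗ[A] M} (hπ : Function.Surjective π)
    (hJ : Function.Injective (TensorProduct.lift ((LinearMap.lsmul A M).comp J.subtype)))
    {x : F} (hx : x ∈ J • (⊤ : Submodule A F)) (hx0 : π x = 0) :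
    x ∈ J • LinearMap.ker π := by
  obtain ⟨t, rfl⟩ := exists_lTensor_subtype_of_mem_smul J ⊤ hx
  rw [← lift_lsmul_lTensor] at hx0
  obtain ⟨u, hu⟩ := (lTensor_exact J (LinearMap.exact_subtype_ker_map π) hπ _).1
    ((injective_iff_map_eq_zero _).1 hJ _ hx0)
  rw [← hu]
  exact lift_lTensor_subtype_mem_smul J _ u

/-- If `F` is flat, `M = F / L`, and `L ∩ J F ⊆ J L` for all ideals `J`, then `M` is flat. -/
theorem Module.Flat.of_forall_mem_smul_ker [Module.Flat A F] {π : F →ₗ[A] M}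
    (hπ : Function.Surjective π)
    (h : ∀ (J : Ideal A) (x : F), x ∈ J • (⊤ : Submodule A F) → π x = 0 →
      x ∈ J • LinearMap.ker π) : Module.Flat A M := by
  rw [Module.Flat.iff_lift_lsmul_comp_subtype_injective]
  intro J hJ
  rw [injective_iff_map_eq_zero]
  intro s hs
  obtain ⟨t, rfl⟩ := LinearMap.lTensor_surjective J hπ s
  rw [lift_lsmul_lTensor] at hs
  have ht : TensorProduct.lift ((LinearMap.lsmul A F).comp J.subtype) t ∈
      J • (⊤ : Submodule A F) := by
    obtain ⟨t, rfl⟩ := LinearMap.lTensor_surjective J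
      (g := (⊤ : Submodule A F).subtype) (fun y ↦ ⟨⟨y, trivial⟩, rfl⟩) t
    exact lift_lTensor_subtype_mem_smul J _ t
  obtain ⟨u, hu⟩ := exists_lTensor_subtype_of_mem_smul J _ (h J _ ht hs)
  rw [← Module.Flat.iff_lift_lsmul_comp_subtype_injective.1 ‹_› hJ hu]
  exact (_root_.lTensor_exact J (LinearMap.exact_subtype_ker_map π) hπ _).2 ⟨u, rfl⟩

/-- Elements of `J F` are finite sums `∑ rᵢ eᵢ` with `rᵢ ∈ J`. -/
theorem exists_sum_smul_of_mem_smul_top {J : Ideal A} {x : F}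
    (hx : x ∈ J • (⊤ : Submodule A F)) :
    ∃ (k : ℕ) (r : Fin k → A) (e : Fin k → F), (∀ i, r i ∈ J) ∧ ∑ i, r i • e i = x := by
  induction hx using Submodule.smul_induction_on' with
  | smul r hr n hn => exact ⟨1, fun _ ↦ r, fun _ ↦ n, by simpa, by simp⟩
  | add x _ y _ hx hy =>
    obtain ⟨k, r, e, hr, rfl⟩ := hx
    obtain ⟨l, s, f, hs, rfl⟩ := hy
    refine ⟨k + l, Fin.append r s, Fin.append e f, fun i ↦ ?_, by simp [Fin.sum_univ_add]⟩
    refine Fin.addCases (fun i ↦ ?_) (fun i ↦ ?_) i <;> simp [hr, hs]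

/-- If `M = F / L` is such that `M / I M` is flat over `A / I`, and `L ∩ I F ⊆ I L`, then
`L ∩ J F ⊆ J L` for every ideal `J` containing `I`. -/
theorem mem_smul_ker_of_flat_quotient {I J : Ideal A} (hIJ : I ≤ J) {π : F →ₗ[A] M}
    (hπ : Function.Surjective π) (hflat : Module.Flat (A ⧸ I) ((A ⧸ I) ⊗[A] M))
    (hI : ∀ x ∈ I • (⊤ : Submodule A F), π x = 0 → x ∈ I • LinearMap.ker π)
    {x : F} (hx : x ∈ J • (⊤ : Submodule A F)) (hx0 : π x = 0) :
    x ∈ J • LinearMap.ker π := by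
  obtain ⟨k, r, e, hr, rfl⟩ := exists_sum_smul_of_mem_smul_top hx
  let φ : F →ₗ[A] (A ⧸ I) ⊗[A] M := TensorProduct.mk A (A ⧸ I) M 1 ∘ₗ π
  have hφ : Function.Surjective φ :=
    (TensorProduct.mk_surjective A M (A ⧸ I) Ideal.Quotient.mk_surjective).comp hπ
  have hφ0 : ∀ y, φ y = 0 → ∃ z ∈ I • (⊤ : Submodule A F), π z = π y := by
    intro y hy
    have := congrArg (TensorProduct.quotTensorEquivQuotSMul M I) hy
    simp only [φ, LinearMap.comp_apply, TensorProduct.mk_apply, map_zero] at this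
    have h1 : (1 : A ⧸ I) = Ideal.Quotient.mk I 1 := rfl
    rw [h1, TensorProduct.quotTensorEquivQuotSMul_mk_tmul, one_smul,
      Submodule.Quotient.mk_eq_zero] at this
    have h2 : I • (⊤ : Submodule A M) = (I • (⊤ : Submodule A F)).map π := by
      rw [Submodule.map_smul'', Submodule.map_top, LinearMap.range_eq_top.2 hπ]
    rw [h2] at this
    exact this
  have hrel : ∑ i, Ideal.Quotient.mk I (r i) • φ (e i) = 0 := by
    have : φ (∑ i, r i • e i) = 0 := by simp only [φ, LinearMap.comp_apply, hx0, map_zero]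
    rw [← this, map_sum]
    refine Finset.sum_congr rfl fun i _ ↦ ?_
    rw [map_smul]
    exact algebraMap_smul (A ⧸ I) (r i) (φ (e i))
  obtain ⟨l, a, y, hy, ha⟩ := Module.Flat.isTrivialRelation_of_sum_smul_eq_zero hrel
  beta_reduce at hy ha
  choose b hb using fun i j ↦ Ideal.Quotient.mk_surjective (a i j)
  choose w hw using fun j ↦ hφ (y j)
  have hz : ∀ i, ∃ z ∈ I • (⊤ : Submodule A F), π z = π (e i - ∑ j, b i j • w j) := by
    intro i
    apply hφ0
    rw [map_sub, map_sum, hy, sub_eq_zero]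
    refine Finset.sum_congr rfl fun j _ ↦ ?_
    rw [map_smul, hw, ← hb]
    exact algebraMap_smul (A ⧸ I) (b i j) (y j)
  choose z hzI hz using hz
  have hsum : ∑ i, r i • e i = ∑ i, r i • (e i - ∑ j, b i j • w j - z i) +
      (∑ i, r i • z i + ∑ j, (∑ i, r i * b i j) • w j) := by
    simp only [smul_sub, Finset.sum_sub_distrib, Finset.smul_sum, Finset.sum_smul, smul_smul]
    rw [Finset.sum_comm (f := fun j i ↦ (r i * b i j) • w j)]
    abel
  have h1 : ∑ i, r i • (e i - ∑ j, b i j • w j - z i) ∈ J • LinearMap.ker π :=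
    sum_mem fun i _ ↦ Submodule.smul_mem_smul (hr i) (by simp [hz])
  rw [hsum] at hx0 ⊢
  refine add_mem h1 (Submodule.smul_mono_left hIJ (hI _ (add_mem ?_ ?_) ?_))
  · exact sum_mem fun i _ ↦ Submodule.smul_mem _ _ (hzI i)
  · refine sum_mem fun j _ ↦ Submodule.smul_mem_smul ?_ trivial
    rw [← Ideal.Quotient.eq_zero_iff_mem, ← ha j]
    simp [hb]
  · rw [map_add, show π _ = 0 from Submodule.smul_le_right h1, zero_add] at hx0
    exact hx0

end Relations

/-- The equational criterion for flatness of `M_𝔮` over `A`, with denominators cleared. -/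
theorem exists_smul_eq_sum_of_flat_localizedModule {A B M : Type*} [CommRing A] [CommRing B]
    [Algebra A B] [AddCommGroup M] [Module B M] [Module A M] [IsScalarTower A B M]
    (q : Ideal B) [q.IsPrime] [Module.Flat A (LocalizedModule q.primeCompl M)]
    {k : ℕ} {r : Fin k → A} {e : Fin k → M} (h : ∑ i, r i • e i = 0) :
    ∃ s ∉ q, ∃ (l : ℕ) (a : Fin k → Fin l → A) (w : Fin l → M),
      (∀ i, s • e i = ∑ j, a i j • w j) ∧ ∀ j, ∑ i, r i * a i j = 0 := by
  let φ := LocalizedModule.mkLinearMap q.primeCompl M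
  have hφ : ∀ (a : A) m, φ (a • m) = a • φ m := fun a m ↦ by
    rw [← algebraMap_smul B a m, map_smul, algebraMap_smul]
  have hrel : ∑ i, r i • φ (e i) = 0 := by
    simp_rw [← hφ, ← map_sum, h, map_zero]
  obtain ⟨l, a, y, hy, ha⟩ := Module.Flat.isTrivialRelation_of_sum_smul_eq_zero hrel
  beta_reduce at hy ha
  obtain ⟨b, hb⟩ := IsLocalizedModule.exist_integer_multiples_of_finite q.primeCompl φ y
  choose w hw using hb
  have hc : ∀ i, ∃ c : q.primeCompl, c • ((b : B) • e i) = c • ∑ j, a i j • w j := by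
    intro i
    refine (IsLocalizedModule.eq_iff_exists q.primeCompl φ).1 ?_
    rw [map_smul, map_sum, hy, Finset.smul_sum]
    refine Finset.sum_congr rfl fun j _ ↦ ?_
    rw [hφ, hw, smul_comm]
  choose c hc using hc
  refine ⟨((∏ i, c i) * b : q.primeCompl), ((∏ i, c i) * b : q.primeCompl).2, l, a,
    fun j ↦ ((∏ i, c i : q.primeCompl) : B) • w j, fun i ↦ ?_, ha⟩
  obtain ⟨d, hd⟩ := Finset.dvd_prod_of_mem c (Finset.mem_univ i)
  have := congrArg (fun m ↦ (d : B) • m) (hc i)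
  simp only [Submonoid.smul_def, smul_smul, Finset.smul_sum] at this
  rw [hd]
  simp only [Submonoid.coe_mul]
  rw [show ((c i : B) * d * b) = d * (c i * b) by ring, this]
  refine Finset.sum_congr rfl fun j _ ↦ ?_
  rw [smul_comm, mul_comm]

section Noetherian

open MvPolynomial

variable {A σ ι : Type*} [CommRing A]

theorem exists_forall_mem_iff_mul_mem [IsNoetherianRing A] {p J : Ideal A} [hp : p.IsPrime]
    {n : ℕ} (hn : p ^ n ≤ J) (hJ : J ≤ p) : ∃ a, ∀ b, b ∈ p ↔ b * a ∈ J := by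
  have hmin : p ∈ (Module.annihilator A (A ⧸ J)).minimalPrimes := by
    rw [Ideal.annihilator_quotient]
    exact ⟨⟨hp, hJ⟩, fun q hq _ ↦ hq.1.le_of_pow_le (hn.trans hq.2)⟩
  obtain ⟨-, x, hx⟩ := Submodule.isAssociatedPrime_iff.1
    (Module.associatedPrimes.minimalPrimes_annihilator_subset_associatedPrimes A (A ⧸ J) hmin)
  obtain ⟨a, rfl⟩ := Ideal.Quotient.mk_surjective x
  refine ⟨a, fun b ↦ ?_⟩
  rw [hx, Submodule.mem_colon_singleton, Submodule.mem_bot, ← Ideal.Quotient.eq_zero_iff_mem,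
    map_mul]
  rfl

/-- Let `L` be a submodule of a free module `F` over a polynomial ring over a Noetherian ring `A`.
If `L ∩ 𝔭F` is contained in `𝔭L` locally at a prime `𝔭`, then so is `L ∩ JF` in `JL` for every
ideal `J` containing a power of `𝔭`. -/
theorem exists_smul_mem_map_smul_of_pow_le [IsNoetherianRing A] (p : Ideal A) [p.IsPrime]
    (L : Submodule (MvPolynomial σ A) (ι → MvPolynomial σ A))
    (hL : ∀ x ∈ L, (∀ i, x i ∈ p.map C) →
      ∃ s ∉ p, (C s : MvPolynomial σ A) • x ∈ p.map (C (σ := σ)) • L)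
    (n : ℕ) (J : Ideal A) (hJ : p ^ n ≤ J) : ∀ x ∈ L, (∀ i, x i ∈ J.map C) →
      ∃ s ∉ p, (C s : MvPolynomial σ A) • x ∈ J.map (C (σ := σ)) • L := by
  induction J using WellFoundedGT.induction with
  | ind J ih =>
  intro x hxL hx
  by_cases hJp : J ≤ p
  swap
  · obtain ⟨s, hsJ, hsp⟩ := SetLike.not_le_iff_exists.1 hJp
    exact ⟨s, hsp, Submodule.smul_mem_smul (Ideal.mem_map_of_mem _ hsJ) hxL⟩
  obtain ⟨a, ha⟩ := exists_forall_mem_iff_mul_mem hJ hJp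
  have haJ : a ∉ J := fun h ↦ ‹p.IsPrime›.ne_top
    ((Ideal.eq_top_iff_one _).2 ((ha 1).2 (by simpa using h)))
  obtain ⟨s, hs, hsx⟩ := ih (J ⊔ Ideal.span {a})
    (lt_of_le_of_ne le_sup_left fun h ↦ haJ (h ▸ Ideal.mem_sup_right
      (Ideal.mem_span_singleton_self a))) (hJ.trans le_sup_left) x hxL
    fun i ↦ Ideal.map_mono le_sup_left (hx i)
  rw [Ideal.map_sup, Submodule.sup_smul, Ideal.map_span, Set.image_singleton,
    Submodule.ideal_span_singleton_smul, Submodule.mem_sup] at hsx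
  obtain ⟨y, hy, z, hz, hyz⟩ := hsx
  obtain ⟨l, hl, rfl⟩ := Submodule.mem_smul_pointwise_iff_exists _ _ _ |>.1 hz
  have hyJ : ∀ i, y i ∈ J.map C := by
    intro i
    clear hyz
    induction hy using Submodule.smul_induction_on' with
    | smul r hr m _ => exact Ideal.mul_mem_right _ _ hr
    | add u _ v _ hu hv => exact add_mem hu hv
  have hlp : ∀ i, l i ∈ p.map C := by
    intro i
    rw [mem_map_C_iff]
    intro m
    have h1 : C a * l i ∈ J.map C := by
      have : C a * l i = C s * x i - y i := by
        have := congrFun hyz i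
        simp only [Pi.add_apply, Pi.smul_apply, smul_eq_mul] at this
        rw [← this]; ring
      rw [this]
      exact sub_mem (Ideal.mul_mem_left _ _ (hx i)) (hyJ i)
    have := mem_map_C_iff.1 h1 m
    rw [coeff_C_mul] at this
    rw [ha, mul_comm]
    exact this
  obtain ⟨t, ht, htl⟩ := hL l hl hlp
  refine ⟨t * s, fun h ↦ (‹p.IsPrime›.mem_or_mem h).elim ht hs, ?_⟩
  rw [map_mul, mul_smul, ← hyz, smul_add, smul_comm (C t) (C a)]
  refine add_mem (Submodule.smul_mem _ _ hy) ?_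
  have h2 : (Ideal.span {C a} * p.map C : Ideal (MvPolynomial σ A)) ≤ J.map C := by
    rw [← Set.image_singleton, ← Ideal.map_span, ← Ideal.map_mul]
    refine Ideal.map_mono (Ideal.span_singleton_mul_le_iff.2 fun b hb ↦ ?_)
    rw [mul_comm]
    exact (ha b).1 hb
  refine Submodule.smul_mono_left h2 ?_
  rw [Submodule.mul_smul]
  exact Submodule.smul_mem_smul (Ideal.mem_span_singleton_self _) htl

/-- Krull's intersection theorem, locally at a prime ideal. -/
theorem exists_smul_eq_zero_of_forall_smul_mem_pow_smul {P N : Type*} [CommRing P]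
    [IsNoetherianRing P] [AddCommGroup N] [Module P N] [Module.Finite P N] (q a : Ideal P)
    [q.IsPrime] (ha : a ≤ q) (x : N)
    (hx : ∀ n : ℕ, ∃ s ∉ q, s • x ∈ a ^ n • (⊤ : Submodule P N)) : ∃ s ∉ q, s • x = 0 := by
  let φ := LocalizedModule.mkLinearMap q.primeCompl N
  have hmap : ∀ (b : Ideal P) (y : N), y ∈ b • (⊤ : Submodule P N) → φ y ∈
      (b.map (algebraMap P (Localization.AtPrime q)) • ⊤ :
        Submodule (Localization.AtPrime q) (LocalizedModule q.primeCompl N)) := by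
    intro b y hy
    induction hy using Submodule.smul_induction_on' with
    | smul r hr m _ =>
      rw [map_smul, ← algebraMap_smul (Localization.AtPrime q)]
      exact Submodule.smul_mem_smul (Ideal.mem_map_of_mem _ hr) trivial
    | add u _ v _ hu hv => rw [map_add]; exact add_mem hu hv
  have hbot : φ x ∈ (⨅ n : ℕ, a.map (algebraMap P (Localization.AtPrime q)) ^ n • ⊤ :
      Submodule (Localization.AtPrime q) (LocalizedModule q.primeCompl N)) := by
    rw [Submodule.mem_iInf]
    intro n
    obtain ⟨s, hs, hsx⟩ := hx n
    have h := hmap _ _ hsx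
    rw [Ideal.map_pow, map_smul, ← algebraMap_smul (Localization.AtPrime q)] at h
    exact (Submodule.smul_mem_iff_of_isUnit _
      (IsLocalization.map_units (Localization.AtPrime q) (⟨s, hs⟩ : q.primeCompl))).1 h
  rw [Ideal.iInf_pow_smul_eq_bot_of_isLocalRing, Submodule.mem_bot] at hbot
  · obtain ⟨c, hc⟩ := (IsLocalizedModule.eq_zero_iff q.primeCompl φ).1 hbot
    exact ⟨c, c.2, hc⟩
  · refine ne_top_of_le_ne_top (IsLocalRing.maximalIdeal.isMaximal _).ne_top
      (le_trans (Ideal.map_mono ha) (Localization.AtPrime.map_eq_maximalIdeal).le)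

/-- A local criterion for flatness over a Noetherian ring, for a finitely generated
submodule `L` of a finite free module `F` over a polynomial ring. -/
theorem exists_smul_mem_map_smul_of_isNoetherianRing [Finite σ] [Finite ι] [IsNoetherianRing A]
    (q : Ideal (MvPolynomial σ A)) [q.IsPrime]
    (L : Submodule (MvPolynomial σ A) (ι → MvPolynomial σ A))
    (hL : ∀ x ∈ L, (∀ i, x i ∈ (q.comap C).map C) →
      ∃ s ∉ q.comap C, (C s : MvPolynomial σ A) • x ∈ (q.comap C).map (C (σ := σ)) • L)
    (J : Ideal A) (x : ι → MvPolynomial σ A) (hxL : x ∈ L) (hx : ∀ i, x i ∈ J.map C) :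
    ∃ s ∉ q, s • x ∈ J.map (C (σ := σ)) • L := by
  let K : Submodule (MvPolynomial σ A) L := J.map (C (σ := σ)) • ⊤
  have hK : ∀ (b : Ideal (MvPolynomial σ A)) (y : L), y ∈ b • (⊤ : Submodule _ L) ↔
      (y : ι → MvPolynomial σ A) ∈ b • L := fun b y ↦
    Submodule.mem_smul_top_iff b L y
  obtain ⟨s, hs, hsx⟩ := exists_smul_eq_zero_of_forall_smul_mem_pow_smul q ((q.comap C).map C)
    Ideal.map_comap_le (K.mkQ ⟨x, hxL⟩) fun n ↦ by
      obtain ⟨s, hs, hsx⟩ := exists_smul_mem_map_smul_of_pow_le (q.comap C) L hL n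
        (J ⊔ q.comap C ^ n) le_sup_right x hxL fun i ↦ Ideal.map_mono le_sup_left (hx i)
      refine ⟨C s, hs, ?_⟩
      have h1 : (C s : MvPolynomial σ A) • (⟨x, hxL⟩ : L) ∈
          (J ⊔ q.comap C ^ n).map C • (⊤ : Submodule _ L) := (hK _ _).2 hsx
      rw [Ideal.map_sup, Submodule.sup_smul, Ideal.map_pow] at h1
      obtain ⟨y, hy, z, hz, hyz⟩ := Submodule.mem_sup.1 h1
      rw [← map_smul, ← hyz, map_add, show K.mkQ y = 0 by simpa [K] using hy, zero_add]
      rw [← LinearMap.range_eq_top.2 K.mkQ_surjective, ← Submodule.map_top,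
        ← Submodule.map_smul'']
      exact Submodule.mem_map_of_mem hz
  refine ⟨s, hs, ?_⟩
  rw [← map_smul, Submodule.mkQ_apply, Submodule.Quotient.mk_eq_zero] at hsx
  exact (hK _ _).1 hsx

end Noetherian

section Descent

open MvPolynomial

variable {R S σ ι : Type*} [CommRing R] [CommRing S]

theorem compLeft_map_smul (φ : R →+* S) (d : MvPolynomial σ R) (x : ι → MvPolynomial σ R) :
    (map φ).compLeft ι (d • x) = map φ d • (map φ).compLeft ι x := by
  ext1 i
  simp

theorem map_mem_map_C_iff (φ : R →+* S) (J : Ideal S) (d : MvPolynomial σ R) :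
    map φ d ∈ J.map (C (σ := σ)) ↔ d ∈ (J.comap φ).map (C (σ := σ)) := by
  simp [mem_map_C_iff, coeff_map]

theorem exists_sum_of_mem_span_image (φ : R →+* S)
    (L : Submodule (MvPolynomial σ R) (ι → MvPolynomial σ R)) {x : ι → MvPolynomial σ S}
    (hx : x ∈ Submodule.span (MvPolynomial σ S) ((map φ).compLeft ι '' L)) :
    ∃ (k : ℕ) (r : Fin k → S) (l : Fin k → ι → MvPolynomial σ R), (∀ j, l j ∈ L) ∧
      x = ∑ j, (C (r j) : MvPolynomial σ S) • (map φ).compLeft ι (l j) := by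
  have hadd : ∀ x y : ι → MvPolynomial σ S,
      (∃ (k : ℕ) (r : Fin k → S) (l : Fin k → ι → MvPolynomial σ R), (∀ j, l j ∈ L) ∧
        x = ∑ j, (C (r j) : MvPolynomial σ S) • (map φ).compLeft ι (l j)) →
      (∃ (k : ℕ) (r : Fin k → S) (l : Fin k → ι → MvPolynomial σ R), (∀ j, l j ∈ L) ∧
        y = ∑ j, (C (r j) : MvPolynomial σ S) • (map φ).compLeft ι (l j)) →
      ∃ (k : ℕ) (r : Fin k → S) (l : Fin k → ι → MvPolynomial σ R), (∀ j, l j ∈ L) ∧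
        x + y = ∑ j, (C (r j) : MvPolynomial σ S) • (map φ).compLeft ι (l j) := by
    rintro _ _ ⟨k, r, l, hl, rfl⟩ ⟨k', r', l', hl', rfl⟩
    refine ⟨k + k', Fin.append r r', Fin.append l l', fun j ↦ ?_, by simp [Fin.sum_univ_add]⟩
    refine Fin.addCases (fun j ↦ ?_) (fun j ↦ ?_) j <;> simp [hl, hl']
  induction hx using Submodule.span_induction with
  | mem x hx =>
    obtain ⟨l, hl, rfl⟩ := hx
    exact ⟨1, fun _ ↦ 1, fun _ ↦ l, fun _ ↦ hl, by simp⟩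
  | zero => exact ⟨0, Fin.elim0, Fin.elim0, fun j ↦ j.elim0, by simp⟩
  | add x y _ _ hx hy => exact hadd x y hx hy
  | smul d x _ hx =>
    induction d using MvPolynomial.induction_on with
    | C a =>
      obtain ⟨k, r, l, hl, rfl⟩ := hx
      refine ⟨k, fun j ↦ a * r j, l, hl, ?_⟩
      simp [Finset.smul_sum, smul_smul]
    | add d e hd he => rw [add_smul]; exact hadd _ _ hd he
    | mul_X d n hd =>
      obtain ⟨k, r, l, hl, h⟩ := hd
      refine ⟨k, r, fun j ↦ X n • l j, fun j ↦ L.smul_mem _ (hl j), ?_⟩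
      simp_rw [compLeft_map_smul, map_X, smul_comm (C (r _)) (X n : MvPolynomial σ S)]
      rw [← Finset.smul_sum, ← h, smul_smul, mul_comm]

theorem exists_smul_sum_mem_map_smul (φ : R →+* S) (p : Ideal S) [p.IsPrime]
    (L : Submodule (MvPolynomial σ R) (ι → MvPolynomial σ R))
    (L' : Submodule (MvPolynomial σ S) (ι → MvPolynomial σ S))
    (hLL' : ∀ y ∈ L, (map φ).compLeft ι y ∈ L')
    (hL : ∀ y ∈ L, (∀ i, y i ∈ (p.comap φ).map C) →
      (map φ).compLeft ι y ∈ p.map (C (σ := σ)) • L')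
    {k : ℕ} (r : Fin k → S) (l : Fin k → ι → MvPolynomial σ R) (hl : ∀ j, l j ∈ L)
    (hx : ∀ i, (∑ j, (C (r j) : MvPolynomial σ S) • (map φ).compLeft ι (l j)) i ∈ p.map C) :
    ∃ s ∉ p, (C s : MvPolynomial σ S) •
      ∑ j, (C (r j) : MvPolynomial σ S) • (map φ).compLeft ι (l j) ∈ p.map (C (σ := σ)) • L' := by
  induction k with
  | zero => exact ⟨1, p.one_notMem, by simp⟩
  | succ k ih =>
  by_cases ha : ∃ a : Fin (k + 1) → R, ∑ j, φ (a j) * r j ∈ p ∧ ∃ j, φ (a j) ∉ p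
  · obtain ⟨a, ha, j, hj⟩ := ha
    have key : (C (φ (a j)) : MvPolynomial σ S) •
        ∑ j, (C (r j) : MvPolynomial σ S) • (map φ).compLeft ι (l j) =
        (C (∑ j, φ (a j) * r j) : MvPolynomial σ S) • (map φ).compLeft ι (l j) +
        ∑ i, (C (r (j.succAbove i)) : MvPolynomial σ S) • (map φ).compLeft ι
          ((C (a j) : MvPolynomial σ R) • l (j.succAbove i) -
            (C (a (j.succAbove i)) : MvPolynomial σ R) • l j) := by
      simp only [Fin.sum_univ_succAbove _ j, map_sub, compLeft_map_smul, map_C, smul_sub,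
        Finset.sum_sub_distrib, smul_add, Finset.smul_sum, smul_smul, map_add, map_sum, add_smul,
        Finset.sum_smul, map_mul]
      simp only [mul_comm (C (r _))]
      abel
    have h1 : (C (∑ j, φ (a j) * r j) : MvPolynomial σ S) • (map φ).compLeft ι (l j) ∈
        p.map (C (σ := σ)) • L' :=
      Submodule.smul_mem_smul (Ideal.mem_map_of_mem _ ha) (hLL' _ (hl j))
    obtain ⟨s, hs, hsx⟩ := ih (fun i ↦ r (j.succAbove i))
      (fun i ↦ (C (a j) : MvPolynomial σ R) • l (j.succAbove i) -
            (C (a (j.succAbove i)) : MvPolynomial σ R) • l j)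
      (fun i ↦ sub_mem (L.smul_mem _ (hl _)) (L.smul_mem _ (hl _))) fun i ↦ by
        rw [← sub_eq_iff_eq_add'] at key
        rw [← key]
        exact sub_mem (Ideal.mul_mem_left _ _ (hx i))
          (Ideal.mul_mem_right _ _ (Ideal.mem_map_of_mem _ ha))
    refine ⟨s * φ (a j), fun h ↦ (‹p.IsPrime›.mem_or_mem h).elim hs hj, ?_⟩
    rw [map_mul, mul_smul, key, smul_add]
    exact add_mem (Submodule.smul_mem _ _ h1) hsx
  · push Not at ha
    refine ⟨1, p.one_notMem, Submodule.smul_mem _ _ (sum_mem fun j _ ↦ Submodule.smul_mem _ _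
      (hL _ (hl j) fun i ↦ mem_map_C_iff.2 fun m ↦ ha (fun j ↦ coeff m (l j i)) ?_ j))⟩
    have := mem_map_C_iff.1 (hx i) m
    simpa [Finset.sum_apply, coeff_sum, coeff_C_mul, coeff_map, mul_comm] using this

theorem compLeft_map_mem_map_smul (φ : R →+* S) (J : Ideal S)
    {L : Submodule (MvPolynomial σ R) (ι → MvPolynomial σ R)}
    {L' : Submodule (MvPolynomial σ S) (ι → MvPolynomial σ S)}
    (hLL' : ∀ y ∈ L, (map φ).compLeft ι y ∈ L') {x : ι → MvPolynomial σ R}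
    (hx : x ∈ (J.comap φ).map (C (σ := σ)) • L) :
    (map φ).compLeft ι x ∈ J.map (C (σ := σ)) • L' := by
  induction hx using Submodule.smul_induction_on' with
  | smul d hd m hm =>
    rw [compLeft_map_smul]
    exact Submodule.smul_mem_smul ((map_mem_map_C_iff φ J d).2 hd) (hLL' m hm)
  | add u _ v _ hu hv => rw [map_add]; exact add_mem hu hv

theorem compLeft_map_mem_of_mem_span_image {R' : Type*} [CommRing R'] (φ : R →+* R') (ψ : R' →+* S)
    {L : Submodule (MvPolynomial σ R) (ι → MvPolynomial σ R)}
    {L' : Submodule (MvPolynomial σ S) (ι → MvPolynomial σ S)}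
    (hLL' : ∀ y ∈ L, (map (ψ.comp φ)).compLeft ι y ∈ L') {z : ι → MvPolynomial σ R'}
    (hz : z ∈ Submodule.span (MvPolynomial σ R') ((map φ).compLeft ι '' L)) :
    (map ψ).compLeft ι z ∈ L' := by
  induction hz using Submodule.span_induction with
  | mem z hz =>
    obtain ⟨z, hz, rfl⟩ := hz
    convert hLL' z hz using 1
    ext1 i
    simp [map_map]
  | zero => simp
  | add y z _ _ hy hz => rw [map_add]; exact add_mem hy hz
  | smul c y _ hy => rw [compLeft_map_smul]; exact Submodule.smul_mem _ _ hy

/-- The Noetherian case transferred along a ring homomorphism `ψ` with Noetherian source. -/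
theorem exists_smul_compLeft_map_mem_map_smul {R' : Type*} [CommRing R'] [IsNoetherianRing R']
    [Finite σ] [Finite ι] (φ : R →+* R') (ψ : R' →+* S) (q : Ideal (MvPolynomial σ S)) [q.IsPrime]
    {L : Submodule (MvPolynomial σ R) (ι → MvPolynomial σ R)}
    {L' : Submodule (MvPolynomial σ S) (ι → MvPolynomial σ S)}
    (hLL' : ∀ y ∈ L, (map (ψ.comp φ)).compLeft ι y ∈ L')
    (hL : ∀ y ∈ L, (∀ i, y i ∈ ((q.comap C).comap (ψ.comp φ)).map C) →
      (map φ).compLeft ι y ∈ ((q.comap C).comap ψ).map (C (σ := σ)) •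
        Submodule.span (MvPolynomial σ R') ((map φ).compLeft ι '' L))
    (J : Ideal S) {x : ι → MvPolynomial σ R'}
    (hxL : x ∈ Submodule.span (MvPolynomial σ R') ((map φ).compLeft ι '' L))
    (hx : ∀ i, map ψ (x i) ∈ J.map C) :
    ∃ s ∉ q, s • (map ψ).compLeft ι x ∈ J.map (C (σ := σ)) • L' := by
  have hq : (q.comap (map ψ)).comap C = (q.comap C).comap ψ := by
    ext a
    simp [Ideal.mem_comap, map_C]
  obtain ⟨s, hs, hsx⟩ := exists_smul_mem_map_smul_of_isNoetherianRing (q.comap (map ψ))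
    (Submodule.span (MvPolynomial σ R') ((map φ).compLeft ι '' L)) (fun z hz hzp ↦ by
      obtain ⟨k, r, l, hl, rfl⟩ := exists_sum_of_mem_span_image φ L hz
      refine exists_smul_sum_mem_map_smul φ _ L _
        (fun y hy ↦ Submodule.subset_span (Set.mem_image_of_mem _ hy))
        (fun y hy hyp ↦ ?_) r l hl hzp
      rw [hq] at hyp ⊢
      exact hL y hy hyp)
    (J.comap ψ) x hxL (fun i ↦ (map_mem_map_C_iff _ _ _).1 (hx i))
  refine ⟨map ψ s, hs, ?_⟩
  rw [← compLeft_map_smul]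
  exact compLeft_map_mem_map_smul ψ J
    (fun z hz ↦ compLeft_map_mem_of_mem_span_image φ ψ hLL' hz) hsx

theorem exists_map_subtype_eq {R : Subring S} {d : MvPolynomial σ S}
    (hd : (d.coeffs : Set S) ⊆ R) : ∃ e : MvPolynomial σ R, map R.subtype e = d := by
  have : d ∈ Set.range (map (σ := σ) R.subtype) := by
    rw [mem_range_map_iff_coeffs_subset]
    exact fun a ha ↦ ⟨⟨a, hd ha⟩, rfl⟩
  exact this

theorem exists_isNoetherianRing_subring {T : Set S} (hT : T.Finite) :
    ∃ R : Subring S, IsNoetherianRing R ∧ T ⊆ R ∧ ∀ R' : Subring S, T ⊆ R' → R ≤ R' :=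
  ⟨Subring.closure T, is_noetherian_subring_closure _ hT, Subring.subset_closure,
    fun _ ↦ Subring.closure_le.2⟩

/-- A local criterion for flatness, for a finitely generated submodule `L` of a finite free
module `F` over a polynomial ring over an arbitrary ring: if `L ∩ 𝔭F ⊆ 𝔭L`, where `𝔭` is the
contraction of `𝔮`, then `L ∩ JF` is contained in `JL` locally at `𝔮`, for every ideal `J`. -/
theorem exists_smul_mem_map_smul [Finite σ] [Finite ι] (q : Ideal (MvPolynomial σ S)) [q.IsPrime]
    {L : Submodule (MvPolynomial σ S) (ι → MvPolynomial σ S)} (hLfg : L.FG)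
    (hL : ∀ x ∈ L, (∀ i, x i ∈ (q.comap C).map C) → x ∈ (q.comap C).map (C (σ := σ)) • L)
    (J : Ideal S) {x : ι → MvPolynomial σ S} (hxL : x ∈ L) (hx : ∀ i, x i ∈ J.map C) :
    ∃ s ∉ q, s • x ∈ J.map (C (σ := σ)) • L := by
  obtain ⟨n, w, hw⟩ := Submodule.fg_iff_exists_fin_generating_family.1 hLfg
  have hwL : ∀ j, w j ∈ L := fun j ↦ hw ▸ Submodule.subset_span (Set.mem_range_self j)
  obtain ⟨d, rfl⟩ := (Submodule.mem_span_range_iff_exists_fun _).1 (hw ▸ hxL)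
  obtain ⟨R₀, _, hR₀, hR₀'⟩ := exists_isNoetherianRing_subring
    (T := ⋃ (j) (i), ((w j i).coeffs : Set S))
    (Set.finite_iUnion fun j ↦ Set.finite_iUnion fun i ↦ Finset.finite_toSet _)
  choose w₀ hw₀ using fun j i ↦ exists_map_subtype_eq (d := w j i)
    ((Set.subset_iUnion₂ (s := fun j i ↦ ((w j i).coeffs : Set S)) j i).trans hR₀)
  replace hw₀ : ∀ j, (map R₀.subtype).compLeft ι (w₀ j) = w j := fun j ↦ funext (hw₀ j)
  obtain ⟨L₀, hL₀⟩ : ∃ L₀, L₀ = Submodule.span (MvPolynomial σ R₀) (Set.range w₀) := ⟨_, rfl⟩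
  have hw₀L : ∀ j, w₀ j ∈ L₀ := fun j ↦ hL₀ ▸ Submodule.subset_span (Set.mem_range_self j)
  have hL₀L : ∀ y ∈ L₀, (map R₀.subtype).compLeft ι y ∈ L := by
    intro y hy
    rw [hL₀] at hy
    induction hy using Submodule.span_induction with
    | mem y hy =>
      obtain ⟨j, rfl⟩ := hy
      rw [hw₀]
      exact hwL j
    | zero => simp
    | add y z _ _ hy hz => rw [map_add]; exact add_mem hy hz
    | smul c y _ hy => rw [compLeft_map_smul]; exact Submodule.smul_mem _ _ hy
  obtain ⟨t, y, hy⟩ := Submodule.fg_iff_exists_fin_generating_family.1 (IsNoetherian.noetherian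
    (L₀ ⊓ Submodule.pi Set.univ fun _ ↦ ((q.comap C).comap R₀.subtype).map (C (σ := σ))))
  have hyL₀ : ∀ k, y k ∈ L₀ ∧
      ∀ i, y k i ∈ ((q.comap C).comap R₀.subtype).map (C (σ := σ)) := by
    intro k
    have : y k ∈ Submodule.span (MvPolynomial σ R₀) (Set.range y) :=
      Submodule.subset_span ⟨k, rfl⟩
    rw [hy] at this
    exact ⟨this.1, fun i ↦ this.2 i trivial⟩
  have hc : ∀ k, ∃ c : Fin n → MvPolynomial σ S, (∀ j, c j ∈ (q.comap C).map (C (σ := σ))) ∧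
      ∑ j, c j • w j = (map R₀.subtype).compLeft ι (y k) := by
    intro k
    have := hL _ (hL₀L _ (hyL₀ k).1) fun i ↦ (map_mem_map_C_iff _ _ _).2 ((hyL₀ k).2 i)
    rw [← hw] at this
    obtain ⟨c, hc, hck⟩ := (Submodule.mem_ideal_smul_span_iff_exists_sum _ _ _).1 this
    refine ⟨c, hc, ?_⟩
    rw [← hck, Finsupp.sum_fintype]
    simp
  choose c hcp hc using hc
  obtain ⟨R₁, _, hR₁, -⟩ := exists_isNoetherianRing_subring
    (T := (⋃ (j) (i), ((w j i).coeffs : Set S)) ∪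
      ((⋃ (k) (j), ((c k j).coeffs : Set S)) ∪ ⋃ j, ((d j).coeffs : Set S)))
    ((Set.finite_iUnion fun j ↦ Set.finite_iUnion fun i ↦ Finset.finite_toSet _).union
      ((Set.finite_iUnion fun j ↦ Set.finite_iUnion fun i ↦ Finset.finite_toSet _).union
        (Set.finite_iUnion fun i ↦ Finset.finite_toSet _)))
  rw [Set.union_subset_iff, Set.union_subset_iff] at hR₁
  choose c₁ hc₁ using fun k j ↦ exists_map_subtype_eq (d := c k j)
    ((Set.subset_iUnion₂ (s := fun k j ↦ ((c k j).coeffs : Set S)) k j).trans hR₁.2.1)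
  choose d₁ hd₁ using fun j ↦ exists_map_subtype_eq (d := d j)
    ((Set.subset_iUnion (fun j ↦ ((d j).coeffs : Set S)) j).trans hR₁.2.2)
  obtain ⟨φ, hφ⟩ : ∃ φ : R₀ →+* R₁, R₁.subtype.comp φ = R₀.subtype :=
    ⟨Subring.inclusion (hR₀' _ hR₁.1), rfl⟩
  have hφw : ∀ z : ι → MvPolynomial σ R₀, (map R₁.subtype).compLeft ι ((map φ).compLeft ι z) =
      (map R₀.subtype).compLeft ι z := fun z ↦ by
    ext1 i
    simp only [RingHom.compLeft_apply, Function.comp_apply, map_map, hφ]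
  have hinj : Function.Injective ((map (σ := σ) R₁.subtype).compLeft ι) := fun u v huv ↦
    funext fun i ↦ map_injective _ Subtype.val_injective (congrFun huv i)
  have hsub : ∀ j, (map φ).compLeft ι (w₀ j) ∈
      Submodule.span (MvPolynomial σ R₁) ((map φ).compLeft ι '' L₀) :=
    fun j ↦ Submodule.subset_span ⟨_, hw₀L j, rfl⟩
  have hx₁ : (map R₁.subtype).compLeft ι (∑ j, d₁ j • (map φ).compLeft ι (w₀ j)) =
      ∑ j, d j • w j := by
    rw [map_sum]
    refine Finset.sum_congr rfl fun j _ ↦ ?_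
    rw [compLeft_map_smul, hφw, hw₀, hd₁]
  rw [← hx₁] at hx ⊢
  refine exists_smul_compLeft_map_mem_map_smul φ R₁.subtype q (by rwa [hφ]) ?_ J
    (sum_mem fun j _ ↦ Submodule.smul_mem _ _ (hsub j)) hx
  intro v hv hvp
  rw [hφ] at hvp
  have hv' : v ∈ Submodule.span (MvPolynomial σ R₀) (Set.range y) := by
    rw [hy]
    exact ⟨hv, fun i _ ↦ hvp i⟩
  clear hv hvp
  induction hv' using Submodule.span_induction with
  | mem v hv =>
    obtain ⟨k, rfl⟩ := hv
    have : (map φ).compLeft ι (y k) = ∑ j, c₁ k j • (map φ).compLeft ι (w₀ j) := by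
      apply hinj
      rw [hφw, map_sum, ← hc]
      refine Finset.sum_congr rfl fun j _ ↦ ?_
      rw [compLeft_map_smul, hφw, hw₀, hc₁]
    rw [this]
    refine sum_mem fun j _ ↦ Submodule.smul_mem_smul ?_ (hsub j)
    rw [← map_mem_map_C_iff, hc₁]
    exact hcp k j
  | zero => simp
  | add y z _ _ hy hz => rw [map_add]; exact add_mem hy hz
  | smul c y _ hy => rw [compLeft_map_smul]; exact Submodule.smul_mem _ _ hy

end Descent

section Presentation

open MvPolynomial

variable {A B M σ ι : Type*} [CommRing A] [CommRing B] [Algebra A B] [AddCommGroup M] [Module B M]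
  [Module A M] [IsScalarTower A B M]

theorem mem_smul_top_iff_forall_mem_map_C [Finite ι] (J : Ideal A) (x : ι → MvPolynomial σ A) :
    x ∈ J • (⊤ : Submodule A (ι → MvPolynomial σ A)) ↔ ∀ i, x i ∈ J.map (C (σ := σ)) := by
  classical
  have := Fintype.ofFinite ι
  have hJ : J • (⊤ : Submodule A (ι → MvPolynomial σ A)) =
      (J.map (C (σ := σ)) • (⊤ : Submodule (MvPolynomial σ A) _)).restrictScalars A := by
    rw [← algebraMap_eq, Ideal.smul_restrictScalars, Submodule.restrictScalars_top]
  rw [hJ, Submodule.restrictScalars_mem]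
  refine ⟨fun hx i ↦ ?_, fun hx ↦ ?_⟩
  · induction hx using Submodule.smul_induction_on' with
    | smul d hd m hm => exact Ideal.mul_mem_right _ _ hd
    | add u _ v _ hu hv => exact add_mem hu hv
  · rw [pi_eq_sum_univ' x]
    exact sum_mem fun i _ ↦ Submodule.smul_mem_smul (hx i) trivial

theorem mem_smul_ker_restrictScalars_iff {P : Type*} [CommRing P] [Algebra A P] [Module P M]
    [IsScalarTower A P M] {F : Type*} [AddCommGroup F] [Module P F] [Module A F]
    [IsScalarTower A P F] (J : Ideal A) (π : F →ₗ[P] M) (x : F) :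
    x ∈ J • LinearMap.ker (π.restrictScalars A) ↔
      x ∈ J.map (algebraMap A P) • LinearMap.ker π := by
  rw [LinearMap.ker_restrictScalars, ← Ideal.smul_restrictScalars, Submodule.restrictScalars_mem]

/-- If `M_𝔮` is flat over `A` and `M = F / L`, then `L ∩ J F ⊆ J L` locally at `𝔮`. -/
theorem exists_smul_mem_smul_ker_of_flat_localizedModule {P F : Type*} [CommRing P] [Algebra A P]
    [Algebra P B] [Module P M] [IsScalarTower P B M] [IsScalarTower A P M]
    [AddCommGroup F] [Module P F] [Module A F] [IsScalarTower A P F]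
    (hP : Function.Surjective (algebraMap P B)) {π : F →ₗ[P] M} (hπ : Function.Surjective π)
    (q : Ideal B) [q.IsPrime] [Module.Flat A (LocalizedModule q.primeCompl M)]
    (J : Ideal A) {x : F} (hx : x ∈ J • (⊤ : Submodule A F)) (hx0 : π x = 0) :
    ∃ s ∉ q.comap (algebraMap P B), s • x ∈ J • LinearMap.ker (π.restrictScalars A) := by
  obtain ⟨k, r, e, hr, rfl⟩ := exists_sum_smul_of_mem_smul_top hx
  have hrel : ∑ i, r i • π (e i) = 0 := by
    simpa only [map_sum, LinearMap.map_smul_of_tower] using hx0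
  obtain ⟨s, hs, l, a, w, hw, ha⟩ := exists_smul_eq_sum_of_flat_localizedModule q hrel
  obtain ⟨s, rfl⟩ := hP s
  choose v hv using fun j ↦ hπ (w j)
  refine ⟨s, hs, ?_⟩
  have hsum : s • ∑ i, r i • e i = ∑ i, r i • (s • e i - ∑ j, a i j • v j) := by
    have : ∑ i, r i • ∑ j, a i j • v j = 0 := by
      simp_rw [Finset.smul_sum, smul_smul]
      rw [Finset.sum_comm]
      simp_rw [← Finset.sum_smul, ha, zero_smul, Finset.sum_const_zero]
    simp_rw [smul_sub, Finset.sum_sub_distrib, this, sub_zero, Finset.smul_sum]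
    exact Finset.sum_congr rfl fun i _ ↦ smul_comm _ _ _
  rw [hsum]
  refine sum_mem fun i _ ↦ Submodule.smul_mem_smul (hr i) ?_
  rw [LinearMap.mem_ker, LinearMap.restrictScalars_apply, map_sub, map_smul, map_sum, sub_eq_zero,
    ← algebraMap_smul B, hw]
  exact Finset.sum_congr rfl fun j _ ↦ by rw [LinearMap.map_smul_of_tower, hv]

/-- The relative flatness criterion in terms of a finite presentation of `M` over a polynomial
ring surjecting onto `B`. -/
theorem Module.Flat.of_presentation [Finite σ] [Finite ι] [Algebra (MvPolynomial σ A) B]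
    [Module (MvPolynomial σ A) M] [IsScalarTower (MvPolynomial σ A) B M]
    [IsScalarTower A (MvPolynomial σ A) B] [IsScalarTower A (MvPolynomial σ A) M]
    (hP : Function.Surjective (algebraMap (MvPolynomial σ A) B))
    {π : (ι → MvPolynomial σ A) →ₗ[MvPolynomial σ A] M} (hπ : Function.Surjective π)
    (hfg : (LinearMap.ker π).FG) (I : Ideal A)
    (hquot : Module.Flat (A ⧸ I) ((A ⧸ I) ⊗[A] M))
    (hinj : Function.Injective (TensorProduct.lift ((LinearMap.lsmul A M).comp I.subtype)))
    (hloc : ∀ (q : Ideal B) [q.IsPrime], ¬ I ≤ q.comap (algebraMap A B) →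
      Module.Flat A (LocalizedModule q.primeCompl M)) :
    Module.Flat A M := by
  have hπA : Function.Surjective (π.restrictScalars A) := hπ
  refine Module.Flat.of_forall_mem_smul_ker hπA fun J x hx hx0 ↦ ?_
  rw [mem_smul_ker_restrictScalars_iff, algebraMap_eq]
  by_contra hxJ
  obtain ⟨m, hm, hle⟩ := Ideal.exists_le_maximal
    ((J.map (C (σ := σ)) • LinearMap.ker π).colon {x})
    (fun h ↦ hxJ (by simpa [Ideal.eq_top_iff_one, Submodule.mem_colon_singleton] using h))
  suffices ∃ s ∉ m, s • x ∈ J.map (C (σ := σ)) • LinearMap.ker π by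
    obtain ⟨s, hs, hsx⟩ := this
    exact hs (hle (Submodule.mem_colon_singleton.2 hsx))
  by_cases hker : RingHom.ker (algebraMap (MvPolynomial σ A) B) ≤ m
  · by_cases hI : I ≤ m.comap C
    · have hIker : ∀ y ∈ I • (⊤ : Submodule A (ι → MvPolynomial σ A)),
          (π.restrictScalars A) y = 0 → y ∈ I • LinearMap.ker (π.restrictScalars A) :=
        fun y hy hy0 ↦ mem_smul_ker_of_injective hπA hinj hy hy0
      refine exists_smul_mem_map_smul m hfg (fun y hy hyp ↦ ?_) J hx0
        ((mem_smul_top_iff_forall_mem_map_C J x).1 hx)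
      rw [← algebraMap_eq, ← mem_smul_ker_restrictScalars_iff]
      exact mem_smul_ker_of_flat_quotient hI hπA hquot hIker
        ((mem_smul_top_iff_forall_mem_map_C _ y).2 hyp) hy
    · have hcomap : (m.map (algebraMap (MvPolynomial σ A) B)).comap
          (algebraMap (MvPolynomial σ A) B) = m := by
        rw [Ideal.comap_map_of_surjective _ hP, ← RingHom.ker_eq_comap_bot, sup_eq_left]
        exact hker
      have : (m.map (algebraMap (MvPolynomial σ A) B)).IsPrime :=
        Ideal.map_isPrime_of_surjective hP hker
      have : Module.Flat A (LocalizedModule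
          (m.map (algebraMap (MvPolynomial σ A) B)).primeCompl M) := by
        refine hloc _ fun h ↦ hI ?_
        rwa [IsScalarTower.algebraMap_eq A (MvPolynomial σ A) B, ← Ideal.comap_comap, hcomap,
          algebraMap_eq] at h
      obtain ⟨s, hs, hsx⟩ := exists_smul_mem_smul_ker_of_flat_localizedModule hP hπ
        (m.map (algebraMap (MvPolynomial σ A) B)) J hx hx0
      rw [hcomap] at hs
      rw [mem_smul_ker_restrictScalars_iff, algebraMap_eq] at hsx
      exact ⟨s, hs, hsx⟩
  · obtain ⟨s, hs, hsm⟩ := SetLike.not_le_iff_exists.1 hker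
    refine ⟨s, hsm, ?_⟩
    rw [← algebraMap_eq, ← mem_smul_ker_restrictScalars_iff]
    obtain ⟨k, r, e, hr, rfl⟩ := exists_sum_smul_of_mem_smul_top hx
    rw [Finset.smul_sum]
    refine sum_mem fun i _ ↦ ?_
    rw [smul_comm]
    refine Submodule.smul_mem_smul (hr i) ?_
    rw [LinearMap.mem_ker, LinearMap.restrictScalars_apply, map_smul, ← algebraMap_smul B,
      (RingHom.mem_ker).1 hs, zero_smul]

/-- Flatness of `M_𝔮` over `A_𝔭` implies flatness over `A`. -/
theorem Module.Flat.localizedModule_of_localization_comap (q : Ideal B) [q.IsPrime]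
    (h : letI : Module (Localization.AtPrime (q.comap (algebraMap A B)))
          (LocalizedModule q.primeCompl M) :=
        Module.compHom _ (Localization.localRingHom (q.comap (algebraMap A B)) q
          (algebraMap A B) rfl)
      Module.Flat (Localization.AtPrime (q.comap (algebraMap A B)))
        (LocalizedModule q.primeCompl M)) :
    Module.Flat A (LocalizedModule q.primeCompl M) := by
  let : Module (Localization.AtPrime (q.comap (algebraMap A B)))
      (LocalizedModule q.primeCompl M) :=
    Module.compHom _ (Localization.localRingHom (q.comap (algebraMap A B)) q
      (algebraMap A B) rfl)
  have : IsScalarTower A (Localization.AtPrime (q.comap (algebraMap A B)))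
      (LocalizedModule q.primeCompl M) := by
    refine IsScalarTower.of_algebraMap_smul fun a m ↦ ?_
    change Localization.localRingHom (q.comap (algebraMap A B)) q (algebraMap A B) rfl
      (algebraMap A _ a) • m = a • m
    rw [Localization.localRingHom_to_map, algebraMap_smul, algebraMap_smul]
  have := IsLocalization.flat (Localization.AtPrime (q.comap (algebraMap A B)))
    (q.comap (algebraMap A B)).primeCompl
  exact Module.Flat.trans A (Localization.AtPrime (q.comap (algebraMap A B))) _

end Presentation

/-- **Relative flatness criterion** (Remark `GeneralFlatnessCrit`): let `A` be a commutative
ring, `I ⊆ A` an ideal, `B` a finitely presented commutative `A`-algebra, and `M` a finitely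
presented `B`-module (viewed as an `A`-module by restriction of scalars). If
(a) `M/IM ≅ (A/I) ⊗[A] M` is a flat `A/I`-module and the canonical map `I ⊗[A] M → M` is
injective, and (b) for every prime `𝔮` of `B` whose contraction `𝔭` to `A` does not contain
`I`, the localization `M_𝔮` is a flat `A_𝔭`-module, then `M` is a flat `A`-module. -/
theorem relative_flatness_criterion {A B : Type} [CommRing A] [CommRing B] [Algebra A B]
    [Algebra.FinitePresentation A B] (I : Ideal A)
    (M : Type) [AddCommGroup M] [Module B M] [Module A M] [IsScalarTower A B M]
    [Module.FinitePresentation B M]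
    (h1 : Module.Flat (A ⧸ I) ((A ⧸ I) ⊗[A] M))
    (h2 : Function.Injective (TensorProduct.lift ((LinearMap.lsmul A M).comp I.subtype)))
    (h3 : ∀ (q : Ideal B) [q.IsPrime], ¬ I ≤ q.comap (algebraMap A B) →
      letI : Module (Localization.AtPrime (q.comap (algebraMap A B)))
          (LocalizedModule q.primeCompl M) :=
        Module.compHom _ (Localization.localRingHom (q.comap (algebraMap A B)) q
          (algebraMap A B) rfl)
      Module.Flat (Localization.AtPrime (q.comap (algebraMap A B)))
        (LocalizedModule q.primeCompl M)) :
    Module.Flat A M := by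
  obtain ⟨n, f, hf, hker⟩ := Algebra.FinitePresentation.out (R := A) (A := B)
  let : Algebra (MvPolynomial (Fin n) A) B := f.toRingHom.toAlgebra
  let : Module (MvPolynomial (Fin n) A) M := Module.compHom M f.toRingHom
  have : IsScalarTower (MvPolynomial (Fin n) A) B M := .of_algebraMap_smul fun _ _ ↦ rfl
  have : IsScalarTower A (MvPolynomial (Fin n) A) B :=
    .of_algebraMap_eq fun a ↦ (f.commutes a).symm
  have : IsScalarTower A (MvPolynomial (Fin n) A) M := .of_algebraMap_smul fun a m ↦ by
    rw [← algebraMap_smul B, ← IsScalarTower.algebraMap_apply, algebraMap_smul]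
  have : Module.FinitePresentation (MvPolynomial (Fin n) A) B :=
    Module.finitePresentation_of_surjective (Algebra.linearMap (MvPolynomial (Fin n) A) B) hf hker
  have := Module.FinitePresentation.trans (R := MvPolynomial (Fin n) A) (M := M) B
  obtain ⟨r, π, hπ⟩ := Module.Finite.exists_fin' (MvPolynomial (Fin n) A) M
  exact Module.Flat.of_presentation hf hπ (Module.FinitePresentation.fg_ker π hπ) I h1 h2
    fun q _ hq ↦ Module.Flat.localizedModule_of_localization_comap q (h3 q hq)
end

section
/- Let A be a commutative ring. Suppose given a family (M_j)_{j∈ℤ} of A-modules and A-linear maps t_j : M_{j+1} → M_j. Let N = ⊕_{j∈ℤ} M_j and let φ : N → N be the A-linear endomorphism that sends the component M_{j+1} into M_j via t_j; regard N as a module over the polynomial ring A[X] with X acting by φ. Then N is a finitely generated projective A[X]-module if and only if the following three conditions hold: (i) every M_j is a finitely generated projective A-module; (ii) every t_j is injective and its cokernel is a finitely generated projective A-module; (iii) there exists j₀ such that M_j = 0 for all j ≥ j₀, and there exists j₁ such that t_j is bijective for all j ≤ j₁. -/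
open DirectSum

/-- A filtered `A`-module: a `ℤ`-indexed family of `A`-modules `M j` with transition maps
`t j : M j →ₗ[A] M (j-1)`.  The endomorphism `φ` of `N = ⨁ j, M j` sends the component `M j`
into `M (j-1)` via `t j`. -/
noncomputable def filtShift {A : Type} [CommRing A] (M : ℤ → Type)
    [∀ j, AddCommGroup (M j)] [∀ j, Module A (M j)]
    (t : ∀ j : ℤ, M j →ₗ[A] M (j - 1)) : (⨁ j, M j) →ₗ[A] ⨁ j, M j :=
  DirectSum.toModule A ℤ _ fun j => (DirectSum.lof A ℤ M (j - 1)).comp (t j)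

open Polynomial in
/-- If `N` is finite projective over `A[X]`, with `X` acting by `φ`, then `N / φ N` is finite
projective over `A`. -/
theorem Module.AEval'.finite_projective_quotient_range {A N : Type*} [CommRing A] [AddCommGroup N]
    [Module A N] (φ : N →ₗ[A] N) [Module.Finite A[X] (Module.AEval' φ)]
    [Module.Projective A[X] (Module.AEval' φ)] :
    Module.Finite A (N ⧸ LinearMap.range φ) ∧ Module.Projective A (N ⧸ LinearMap.range φ) := by
  obtain ⟨n, f, g, -, -, hfg⟩ :=
    Module.Finite.exists_comp_eq_id_of_projective A[X] (Module.AEval' φ)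
  let fA : (Fin n → A) →ₗ[A] N := (Module.AEval'.of φ).symm.toLinearMap ∘ₗ
    f.restrictScalars A ∘ₗ LinearMap.compLeft (Algebra.linearMap A A[X]) (Fin n)
  let gA : N →ₗ[A] Fin n → A := LinearMap.compLeft (lcoeff A 0) (Fin n) ∘ₗ
    g.restrictScalars A ∘ₗ (Module.AEval'.of φ).toLinearMap
  have hg : LinearMap.range φ ≤ LinearMap.ker gA := by
    rintro _ ⟨y, rfl⟩
    ext k
    simp [gA, ← Module.AEval'.X_smul_of]
  let i := (LinearMap.range φ).liftQ gA hg
  let s := (LinearMap.range φ).mkQ ∘ₗ fA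
  have hsi : s ∘ₗ i = LinearMap.id := by
    apply Submodule.linearMap_qext
    ext x
    simp only [s, i, LinearMap.comp_apply, Submodule.mkQ_apply, Submodule.liftQ_apply,
      LinearMap.id_apply]
    rw [eq_comm, Submodule.Quotient.eq]
    refine ⟨(Module.AEval'.of φ).symm (f fun k => (g (Module.AEval'.of φ x) k).divX), ?_⟩
    rw [← Module.AEval'.of_symm_X_smul, ← map_smul]
    apply (Module.AEval'.of φ).injective
    have hx : f (g (Module.AEval'.of φ x)) = Module.AEval'.of φ x := LinearMap.congr_fun hfg _
    have hd : (X : A[X]) • (fun k => (g (Module.AEval'.of φ x) k).divX) =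
        g (Module.AEval'.of φ x) - fun k => C ((g (Module.AEval'.of φ x) k).coeff 0) := by
      funext k
      simp only [Pi.smul_apply, Pi.sub_apply, smul_eq_mul, eq_sub_iff_add_eq, X_mul_divX_add]
    rw [LinearEquiv.apply_symm_apply, hd, map_sub, map_sub, hx]
    rfl
  refine ⟨Module.Finite.of_surjective s fun x => ⟨i x, LinearMap.congr_fun hsi x⟩, ?_⟩
  exact Module.Projective.of_split i s hsi

open Polynomial in
/-- The action of `X` on a projective `A[X]`-module is injective. -/
theorem Module.AEval'.injective_of_projective {A N : Type*} [CommRing A] [AddCommGroup N]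
    [Module A N] (φ : N →ₗ[A] N) [Module.Projective A[X] (Module.AEval' φ)] :
    Function.Injective φ := by
  obtain ⟨s, hs⟩ := Module.projective_def'.mp
    (inferInstance : Module.Projective A[X] (Module.AEval' φ))
  have hinj : Function.Injective s := fun x y h => by
    rw [← LinearMap.id_apply (R := A[X]) x, ← LinearMap.id_apply (R := A[X]) y, ← hs,
      LinearMap.comp_apply, LinearMap.comp_apply, h]
  intro x y hxy
  apply (Module.AEval'.of φ).injective
  apply hinj
  have h : (X : A[X]) • s (Module.AEval'.of φ x) = (X : A[X]) • s (Module.AEval'.of φ y) := by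
    rw [← s.map_smul, ← s.map_smul, Module.AEval'.X_smul_of, Module.AEval'.X_smul_of, hxy]
  ext1 k
  have hk := DFunLike.congr_fun h k
  simp only [Finsupp.smul_apply, smul_eq_mul] at hk
  exact isRegular_X.left hk

open Polynomial in
/-- A `φ`-stable submodule containing a set of generators over `A[X]` is everything. -/
theorem Module.AEval'.mem_of_span_eq_top {A N : Type*} [CommRing A] [AddCommGroup N] [Module A N]
    {φ : N →ₗ[A] N} {S : Set (Module.AEval' φ)} (hS : Submodule.span A[X] S = ⊤)
    (P : Submodule A N) (hP : ∀ x ∈ P, φ x ∈ P) (hSP : ∀ x, Module.AEval'.of φ x ∈ S → x ∈ P)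
    (x : N) : x ∈ P := by
  let PX := Module.AEval.mapSubmodule A N φ ⟨P, hP⟩
  have hle : Submodule.span A[X] S ≤ PX := Submodule.span_le.mpr fun y hy => by
    obtain ⟨y, rfl⟩ := (Module.AEval'.of φ).surjective y
    exact Module.AEval.mem_mapSubmodule_apply A N φ |>.mpr (hSP y hy)
  have hx : Module.AEval'.of φ x ∈ PX := hle (hS ▸ Submodule.mem_top)
  exact Module.AEval.mem_mapSubmodule_apply A N φ |>.mp hx

open Polynomial in
/-- Let `ψ` be a locally nilpotent left inverse of `φ` such that the projection `1 - φ ψ` factors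
through a finite projective `A`-module. Then `N`, with `X` acting by `φ`, is finite projective over
`A[X]`. -/
theorem Module.AEval'.finite_projective_of_leftInverse {A N Q : Type*} [CommRing A]
    [AddCommGroup N] [Module A N] [AddCommGroup Q] [Module A Q] [Module.Finite A Q]
    [Module.Projective A Q] {φ ψ : N →ₗ[A] N} (hψφ : ∀ x, ψ (φ x) = x)
    (hψ : ∀ x, ∃ n : ℕ, (ψ ^ n) x = 0) (a : N →ₗ[A] Q) (b : Q →ₗ[A] N)
    (hba : ∀ x, b (a (x - φ (ψ x))) = x - φ (ψ x)) :
    Module.Finite A[X] (Module.AEval' φ) ∧ Module.Projective A[X] (Module.AEval' φ) := by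
  obtain ⟨n, u, v, -, -, huv⟩ := Module.Finite.exists_comp_eq_id_of_projective A Q
  let c : N →ₗ[A] Fin n → A := v ∘ₗ a ∘ₗ (LinearMap.id - φ ∘ₗ ψ)
  have hcφ (x : N) : c (φ x) = 0 := by simp [c, hψφ]
  have huc (x : N) : b (u (c x)) = x - φ (ψ x) := by
    rw [← hba]
    exact congrArg b (LinearMap.congr_fun huv _)
  have hfin (x : N) (i : Fin n) : (Function.support fun k : ℕ => c ((ψ ^ k) x) i).Finite := by
    obtain ⟨m, hm⟩ := hψ x
    refine (Set.finite_lt_nat m).subset fun k hk => ?_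
    by_contra hmk
    obtain ⟨l, rfl⟩ := Nat.exists_eq_add_of_le' (not_lt.mp hmk)
    simp [pow_add, hm] at hk
  let g₀ (x : N) (i : Fin n) : A[X] := .ofFinsupp <| .ofCoeff <| .ofSupportFinite _ (hfin x i)
  have hg₀ (x : N) (i : Fin n) (k : ℕ) : (g₀ x i).coeff k = c ((ψ ^ k) x) i := rfl
  let gA : N →ₗ[A] Fin n → A[X] :=
    { toFun := g₀
      map_add' := fun x y => by ext i k; simp [hg₀]
      map_smul' := fun r x => by ext i k; simp [hg₀] }
  have hgA (x : N) (i : Fin n) (k : ℕ) : (gA x i).coeff k = c ((ψ ^ k) x) i := rfl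
  let g : Module.AEval' φ →ₗ[A[X]] Fin n → A[X] := LinearMap.ofAEval φ gA fun x => by
    ext i k
    cases k with
    | zero => simp [hgA, hcφ]
    | succ k => simp [hgA, pow_succ, hψφ]
  have hg (x : N) : g (Module.AEval'.of φ x) = gA x := rfl
  let f : (Fin n → A[X]) →ₗ[A[X]] Module.AEval' φ :=
    Fintype.linearCombination A[X] fun i => Module.AEval'.of φ (b (u (Pi.single i 1)))
  have hfC (w : Fin n → A) : f (fun i => C (w i)) = Module.AEval'.of φ (b (u w)) := by
    conv_rhs => rw [← Finset.univ_sum_single w]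
    simp only [f, Fintype.linearCombination_apply, Module.AEval.C_smul, map_sum, ← map_smul,
      ← Pi.single_smul', smul_eq_mul, mul_one]
  have hfg (m : ℕ) : ∀ x, (ψ ^ m) x = 0 →
      f (g (Module.AEval'.of φ x)) = Module.AEval'.of φ x := by
    induction m with
    | zero =>
      intro x hx
      obtain rfl : x = 0 := by simpa using hx
      simp
    | succ m ih =>
      intro x hx
      have hdecomp : Module.AEval'.of φ x =
          Module.AEval'.of φ (x - φ (ψ x)) + (X : A[X]) • Module.AEval'.of φ (ψ x) := by
        rw [Module.AEval'.X_smul_of, ← map_add, sub_add_cancel]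
      have hconst : gA (x - φ (ψ x)) = fun i => C (c x i) := by
        ext i k
        cases k with
        | zero => simp [hgA, hcφ]
        | succ k => simp [hgA, pow_succ, hψφ, coeff_C_succ]
      rw [hdecomp, map_add, map_add, map_smul, map_smul, ih (ψ x) (by simpa [pow_succ] using hx),
        hg, hconst, hfC, huc]
  have hid : f ∘ₗ g = LinearMap.id := by
    ext x
    obtain ⟨x, rfl⟩ := (Module.AEval'.of φ).surjective x
    obtain ⟨m, hm⟩ := hψ x
    exact hfg m x hm
  exact ⟨Module.Finite.of_surjective f fun x => ⟨g x, LinearMap.congr_fun hid x⟩,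
    Module.Projective.of_split g f hid⟩

/-- An injective linear map with projective cokernel has a linear retraction. -/
theorem LinearMap.exists_leftInverse_of_projective_quotient {A M N : Type*} [CommRing A]
    [AddCommGroup M] [Module A M] [AddCommGroup N] [Module A N] (t : M →ₗ[A] N)
    (ht : Function.Injective t) [Module.Projective A (N ⧸ LinearMap.range t)] :
    ∃ r : N →ₗ[A] M, r ∘ₗ t = LinearMap.id :=
  (((LinearMap.exact_map_mkQ_range t).split_tfae ht (Submodule.mkQ_surjective _)).out 0 1).mp
    (Module.projective_lifting_property _ _ (Submodule.mkQ_surjective _))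

/-- An extension of finite projective modules is finite projective. -/
theorem Module.finite_projective_of_quotient_range {A M N : Type*} [CommRing A]
    [AddCommGroup M] [Module A M] [AddCommGroup N] [Module A N] (t : M →ₗ[A] N)
    (ht : Function.Injective t) [Module.Finite A M] [Module.Projective A M]
    [Module.Finite A (N ⧸ LinearMap.range t)] [Module.Projective A (N ⧸ LinearMap.range t)] :
    Module.Finite A N ∧ Module.Projective A N := by
  obtain ⟨e, -⟩ :=
    (((LinearMap.exact_map_mkQ_range t).split_tfae ht (Submodule.mkQ_surjective _)).out 0 2).mp
      (Module.projective_lifting_property _ _ (Submodule.mkQ_surjective _))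
  exact ⟨Module.Finite.equiv e.symm, Module.Projective.of_equiv' e.symm⟩

section FiltShift

variable {A : Type} [CommRing A] {M : ℤ → Type} [∀ j, AddCommGroup (M j)] [∀ j, Module A (M j)]
  (t : ∀ j : ℤ, M j →ₗ[A] M (j - 1))

theorem filtShift_lof (j : ℤ) (x : M j) :
    filtShift M t (DirectSum.lof A ℤ M j x) = DirectSum.lof A ℤ M (j - 1) (t j x) := by
  simp [filtShift]

theorem filtShift_apply (x : ⨁ j, M j) (j : ℤ) : filtShift M t x (j - 1) = t j (x j) := by
  have h : DirectSum.component A ℤ M (j - 1) ∘ₗ filtShift M t =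
      t j ∘ₗ DirectSum.component A ℤ M j := by
    ext k y
    simp only [LinearMap.comp_apply, filtShift_lof]
    rcases eq_or_ne k j with rfl | hkj
    · simp [DirectSum.component.lof_self]
    · rw [DirectSum.component.of, DirectSum.component.of, dif_neg (by omega), dif_neg hkj, map_zero]
  exact LinearMap.congr_fun h x

theorem DirectSum.exists_forall_lt_natAbs_eq_zero {M : ℤ → Type*} [∀ j, AddCommGroup (M j)]
    (S : Set (⨁ j, M j)) (hS : S.Finite) :
    ∃ d : ℕ, ∀ x ∈ S, ∀ j : ℤ, d < j.natAbs → x j = 0 := by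
  classical
  refine ⟨(hS.toFinset.biUnion fun x => DFinsupp.support x).sup Int.natAbs, fun x hx j hj => ?_⟩
  by_contra hne
  refine (hj.trans_le (Finset.le_sup (f := Int.natAbs) (Finset.mem_biUnion.mpr
    ⟨x, hS.mem_toFinset.mpr hx, DFinsupp.mem_support_iff.mpr hne⟩))).false

/-- If `⨁ j, M j` is finitely generated over `A[X]`, then `M j` vanishes for large `j` and `t j` is
surjective for small `j`. -/
theorem filtShift_bounded_of_finite
    [Module.Finite (Polynomial A) (Module.AEval' (filtShift M t))] :
    (∃ j₀ : ℤ, ∀ j ≥ j₀, Subsingleton (M j)) ∧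
      ∃ j₁ : ℤ, ∀ j ≤ j₁, Function.Surjective (t j) := by
  obtain ⟨S, hS⟩ := (Module.Finite.fg_top (R := Polynomial A) (M := Module.AEval' (filtShift M t)))
  obtain ⟨d, hd⟩ := DirectSum.exists_forall_lt_natAbs_eq_zero
    (Module.AEval'.of (filtShift M t) ⁻¹' S)
    (S.finite_toSet.preimage (Module.AEval'.of (filtShift M t)).injective.injOn)
  constructor
  · refine ⟨d + 1, fun j hj => subsingleton_of_forall_eq 0 fun x => ?_⟩
    let P : Submodule A (⨁ j, M j) := ⨅ j : {j : ℤ // (d : ℤ) < j},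
      LinearMap.ker (DirectSum.component A ℤ M j)
    have hP (y : ⨁ j, M j) : y ∈ P ↔ ∀ j : ℤ, (d : ℤ) < j → y j = 0 := by
      simp [P, DirectSum.apply_eq_component A]
    have hx := (hP _).mp (Module.AEval'.mem_of_span_eq_top hS P
      (fun y hy => (hP _).mpr fun k hk => by
        obtain ⟨k, rfl⟩ : ∃ l, k = l - 1 := ⟨k + 1, by omega⟩
        rw [filtShift_apply, (hP y).mp hy k (by omega), map_zero])
      (fun y hy => (hP _).mpr fun k hk => hd y hy k (by omega))
      (DirectSum.lof A ℤ M j x)) j (by omega)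
    simpa using hx
  · refine ⟨-d, fun j hj x => ?_⟩
    let P : Submodule A (⨁ j, M j) :=
      (LinearMap.range (t j)).comap (DirectSum.component A ℤ M (j - 1))
    have hP (y : ⨁ j, M j) : y ∈ P ↔ ∃ z, t j z = y (j - 1) := Iff.rfl
    have hx := (hP _).mp (Module.AEval'.mem_of_span_eq_top hS P
      (fun y _ => (hP _).mpr ⟨y j, (filtShift_apply t y j).symm⟩)
      (fun y hy => (hP _).mpr ⟨0, by rw [hd y hy (j - 1) (by omega), map_zero]⟩)
      (DirectSum.lof A ℤ M (j - 1) x))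
    simpa using hx

theorem finite_projective_quotient_range_of_filtShift
    [Module.Finite (Polynomial A) (Module.AEval' (filtShift M t))]
    [Module.Projective (Polynomial A) (Module.AEval' (filtShift M t))] (j : ℤ) :
    Module.Finite A (M (j - 1) ⧸ LinearMap.range (t j)) ∧
      Module.Projective A (M (j - 1) ⧸ LinearMap.range (t j)) := by
  obtain ⟨_, _⟩ := Module.AEval'.finite_projective_quotient_range (filtShift M t)
  let i : (M (j - 1) ⧸ LinearMap.range (t j)) →ₗ[A]
      (⨁ j, M j) ⧸ LinearMap.range (filtShift M t) :=
    Submodule.mapQ _ _ (DirectSum.lof A ℤ M (j - 1)) <| by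
      rintro _ ⟨x, rfl⟩
      exact ⟨DirectSum.lof A ℤ M j x, filtShift_lof t j x⟩
  let s : ((⨁ j, M j) ⧸ LinearMap.range (filtShift M t)) →ₗ[A]
      M (j - 1) ⧸ LinearMap.range (t j) :=
    Submodule.mapQ _ _ (DirectSum.component A ℤ M (j - 1)) <| by
      rintro _ ⟨x, rfl⟩
      exact ⟨x j, (filtShift_apply t x j).symm⟩
  have hsi : s ∘ₗ i = LinearMap.id := by
    apply Submodule.linearMap_qext
    ext x
    simp [s, i, DirectSum.component.lof_self]
  exact ⟨Module.Finite.of_surjective s fun x => ⟨i x, LinearMap.congr_fun hsi x⟩,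
    Module.Projective.of_split i s hsi⟩

/-- The endomorphism of `⨁ j, M j` raising degrees by one given by a family of maps
`r j : M (j - 1) → M j`. -/
noncomputable def filtUnshift (r : ∀ j : ℤ, M (j - 1) →ₗ[A] M j) :
    (⨁ j, M j) →ₗ[A] ⨁ j, M j :=
  DFinsupp.mapRange.linearMap r ∘ₗ
    { toFun := DFinsupp.comapDomain (fun j : ℤ => j - 1) (sub_left_injective (b := 1))
      map_add' := DFinsupp.comapDomain_add _ _
      map_smul' := DFinsupp.comapDomain_smul _ _ }

theorem filtUnshift_apply (r : ∀ j : ℤ, M (j - 1) →ₗ[A] M j) (x : ⨁ j, M j) (j : ℤ) :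
    filtUnshift r x j = r j (x (j - 1)) :=
  rfl

theorem filtUnshift_pow_apply_eq_zero (r : ∀ j : ℤ, M (j - 1) →ₗ[A] M j) {x : ⨁ j, M j} {d : ℤ}
    (hx : ∀ j < d, x j = 0) (n : ℕ) : ∀ j < d + n, (filtUnshift r ^ n) x j = 0 := by
  induction n with
  | zero => simpa using hx
  | succ n ih =>
    intro j hj
    rw [pow_succ', Module.End.mul_apply, filtUnshift_apply, ih _ (by push_cast at hj; omega),
      map_zero]

/-- If the `t j` have linear retractions, the `M j` are finite projective, vanish for large `j`, and
`t j` is surjective for small `j`, then `⨁ j, M j` is finite projective over `A[X]`. -/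
theorem filtShift_finite_projective (hM : ∀ j, Module.Finite A (M j) ∧ Module.Projective A (M j))
    (r : ∀ j : ℤ, M (j - 1) →ₗ[A] M j) (hr : ∀ j, r j ∘ₗ t j = LinearMap.id) {j₀ j₁ : ℤ}
    (h₀ : ∀ j ≥ j₀, Subsingleton (M j)) (h₁ : ∀ j ≤ j₁, Function.Surjective (t j)) :
    Module.Finite (Polynomial A) (Module.AEval' (filtShift M t)) ∧
      Module.Projective (Polynomial A) (Module.AEval' (filtShift M t)) := by
  have (j : ℤ) : Module.Finite A (M j) := (hM j).1
  have (j : ℤ) : Module.Projective A (M j) := (hM j).2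
  have hrt (j : ℤ) (x : M j) : r j (t j x) = x := LinearMap.congr_fun (hr j) x
  let p : ℤ → Prop := (· ∈ Finset.Icc (j₁ - 1) j₀)
  let a : (⨁ j, M j) →ₗ[A] ⨁ j : Subtype p, M j := DFinsupp.subtypeDomainLinearMap A M p
  let b : (⨁ j : Subtype p, M j) →ₗ[A] ⨁ j, M j :=
    DirectSum.toModule A _ _ fun j => DirectSum.lof A ℤ M j
  have : Fintype (Subtype p) := Finset.Subtype.fintype _
  have : Module.Finite A (⨁ j : Subtype p, M j) :=
    Module.Finite.equiv (DirectSum.linearEquivFunOnFintype A (Subtype p) fun j => M j).symm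
  have hba : b ∘ₗ a = DFinsupp.filterLinearMap A M p := by
    apply DFinsupp.lhom_ext
    intro j y
    by_cases hj : p j
    · have ha : a (DFinsupp.single j y) =
          DirectSum.lof A (Subtype p) (fun j => M j) ⟨j, hj⟩ y := by
        ext k
        rcases eq_or_ne k ⟨j, hj⟩ with rfl | hkj
        · rw [DirectSum.lof_apply]
          exact DFinsupp.single_eq_same
        · have hjk : j ≠ k := fun h => hkj (Subtype.ext h.symm)
          rw [DirectSum.lof_eq_of, DirectSum.of_eq_of_ne _ _ _ hkj]
          exact DFinsupp.single_eq_of_ne hjk.symm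
      rw [LinearMap.comp_apply, ha, DirectSum.toModule_lof, DFinsupp.filterLinearMap_apply,
        DFinsupp.filter_single_pos _ _ hj]
      rfl
    · have ha : a (DFinsupp.single j y) = 0 := by
        ext k
        have hkj : (k : ℤ) ≠ j := fun h => hj (h ▸ k.2)
        exact DFinsupp.single_eq_of_ne hkj
      rw [LinearMap.comp_apply, ha, map_zero, DFinsupp.filterLinearMap_apply,
        DFinsupp.filter_single_neg _ _ hj]
  refine Module.AEval'.finite_projective_of_leftInverse (ψ := filtUnshift r) (fun x => ?_)
    (fun x => ?_) a b fun x => ?_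
  · ext j
    rw [filtUnshift_apply, filtShift_apply, hrt]
  · obtain ⟨d, hd⟩ := DirectSum.exists_forall_lt_natAbs_eq_zero {x} (Set.finite_singleton x)
    refine ⟨(j₀ + d).toNat, ?_⟩
    ext j
    rcases le_or_gt j₀ j with hj | hj
    · have := h₀ j hj
      exact Subsingleton.elim _ _
    · exact filtUnshift_pow_apply_eq_zero r (d := -d)
        (fun k hk => hd x rfl k (by omega)) _ j (by omega)
  · rw [← LinearMap.comp_apply, hba]
    ext k
    rw [DFinsupp.filterLinearMap_apply, DFinsupp.filter_apply]
    split_ifs with hk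
    · rfl
    obtain ⟨k, rfl⟩ : ∃ j, k = j - 1 := ⟨k + 1, by omega⟩
    rcases le_or_gt k j₁ with hk₁ | hk₁
    · obtain ⟨y, hy⟩ := h₁ k hk₁ (x (k - 1))
      rw [DirectSum.sub_apply, filtShift_apply, filtUnshift_apply, ← hy, hrt, sub_self]
    · have := h₀ (k - 1) (by simp only [p, Finset.mem_Icc] at hk; omega)
      exact Subsingleton.elim _ _

end FiltShift

/-- **Characterization of filtered vector bundles** (Proposition `CharFilteredVB`):
with `N = ⨁ j, M j` viewed as a module over `A[X]` where `X` acts by the shift `φ`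
(via `Module.AEval'`), `N` is a finitely generated projective `A[X]`-module if and only if
(i) every `M j` is finitely generated projective over `A`, (ii) every `t j` is injective with
finitely generated projective cokernel, and (iii) `M j = 0` for all sufficiently large `j` and
`t j` is bijective for all sufficiently small `j`. -/
theorem char_filtered_vector_bundles {A : Type} [CommRing A] (M : ℤ → Type)
    [∀ j, AddCommGroup (M j)] [∀ j, Module A (M j)]
    (t : ∀ j : ℤ, M j →ₗ[A] M (j - 1)) :
    (Module.Finite (Polynomial A) (Module.AEval' (filtShift M t)) ∧
      Module.Projective (Polynomial A) (Module.AEval' (filtShift M t))) ↔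
      ((∀ j : ℤ, Module.Finite A (M j) ∧ Module.Projective A (M j)) ∧
        (∀ j : ℤ, Function.Injective (t j) ∧
          (Module.Finite A (M (j - 1) ⧸ LinearMap.range (t j)) ∧
            Module.Projective A (M (j - 1) ⧸ LinearMap.range (t j)))) ∧
        ((∃ j₀ : ℤ, ∀ j ≥ j₀, Subsingleton (M j)) ∧
          (∃ j₁ : ℤ, ∀ j ≤ j₁, Function.Bijective (t j)))) := by
  constructor
  · rintro ⟨_, _⟩
    have hcoker := finite_projective_quotient_range_of_filtShift t
    have hinj (j : ℤ) : Function.Injective (t j) := by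
      intro x y hxy
      refine DirectSum.of_injective (β := M) j
        (Module.AEval'.injective_of_projective (filtShift M t) ?_)
      rw [← DirectSum.lof_eq_of A, ← DirectSum.lof_eq_of A, filtShift_lof, filtShift_lof, hxy]
    obtain ⟨⟨j₀, h₀⟩, j₁, h₁⟩ := filtShift_bounded_of_finite t
    refine ⟨fun j => ?_, fun j => ⟨hinj j, hcoker j⟩, ⟨j₀, h₀⟩, j₁,
      fun j hj => ⟨hinj j, h₁ j hj⟩⟩
    rcases le_total j₀ j with hj | hj
    · have := h₀ j hj
      exact ⟨inferInstance, inferInstance⟩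
    · induction j, hj using Int.leInductionDown with
      | base =>
        have := h₀ j₀ le_rfl
        exact ⟨inferInstance, inferInstance⟩
      | pred j _ ih =>
        obtain ⟨_, _⟩ := ih
        obtain ⟨_, _⟩ := hcoker j
        exact Module.finite_projective_of_quotient_range (t j) (hinj j)
  · rintro ⟨hM, ht, ⟨j₀, h₀⟩, j₁, h₁⟩
    have hr (j : ℤ) : ∃ r : M (j - 1) →ₗ[A] M j, r ∘ₗ t j = LinearMap.id :=
      have := (ht j).2.2
      LinearMap.exists_leftInverse_of_projective_quotient (t j) (ht j).1
    choose r hr using hr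
    exact filtShift_finite_projective t hM r hr h₀ fun j hj => (h₁ j hj).2
end

section
/- Let A be a commutative ring and z ∈ A a nonzerodivisor, and let B = A[X,Y]/(XY − z). Then: (1) the image of X in B is a nonzerodivisor; (2) the two-element sequence consisting of the images of X and Y is a weakly regular sequence on B (X is a nonzerodivisor on B and Y is a nonzerodivisor on B/(X)); (3) the quotient B/(X,Y) is isomorphic, as an A-algebra, to A/(z). -/
/-- The commutative ring `B = A[X,Y]/(XY - z)`. -/
abbrev ReesRing (A : Type) [CommRing A] (z : A) : Type :=
  MvPolynomial (Fin 2) A ⧸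
    Ideal.span {(MvPolynomial.X 0 * MvPolynomial.X 1 - MvPolynomial.C z :
      MvPolynomial (Fin 2) A)}

/-- The image of `X` in `B = A[X,Y]/(XY - z)`. -/
noncomputable def reesX (A : Type) [CommRing A] (z : A) : ReesRing A z :=
  Ideal.Quotient.mk _ (MvPolynomial.X 0)

/-- The image of `Y` in `B = A[X,Y]/(XY - z)`. -/
noncomputable def reesY (A : Type) [CommRing A] (z : A) : ReesRing A z :=
  Ideal.Quotient.mk _ (MvPolynomial.X 1)

open MvPolynomial in
/-- A coefficient that is a nonzerodivisor stays one modulo any ideal generated by variables. -/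
lemma MvPolynomial.mem_span_X_image_of_C_mul_mem {σ R : Type*} [CommRing R] {z : R}
    (hz : z ∈ nonZeroDivisors R) {s : Set σ} {g : MvPolynomial σ R}
    (h : C z * g ∈ Ideal.span (X '' s)) : g ∈ Ideal.span (X '' s) := by
  rw [mem_ideal_span_X_image] at h ⊢
  intro m hm
  refine h m ?_
  rw [mem_support_iff] at hm ⊢
  rw [coeff_C_mul]
  exact fun h0 => hm ((mul_left_mem_nonZeroDivisors_eq_zero_iff hz).mp h0)

open MvPolynomial in
/-- A variable is a nonzerodivisor modulo any other variable. -/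
lemma MvPolynomial.X_dvd_of_X_dvd_X_mul {σ R : Type*} [CommRing R] {i j : σ} (hij : i ≠ j)
    {f : MvPolynomial σ R} (h : X i ∣ X j * f) : X i ∣ f := by
  rw [← Ideal.mem_span_singleton, ← Set.image_singleton, mem_ideal_span_X_image] at h ⊢
  intro m hm
  have hmem : Finsupp.single j 1 + m ∈ (X j * f).support := by
    rwa [mem_support_iff, coeff_X_mul, ← mem_support_iff]
  simpa [hij] using h _ hmem

section QuotientByMulSub

variable {P : Type*} [CommRing P] {x y z : P}

/-- If `x` is a nonzerodivisor and `z` is a nonzerodivisor modulo `x`, then `x` is a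
nonzerodivisor modulo `x * y - z`. -/
lemma Ideal.Quotient.mk_mem_nonZeroDivisors_of_mul_sub (hx : x ∈ nonZeroDivisors P)
    (hz : ∀ g, x ∣ z * g → x ∣ g) :
    Ideal.Quotient.mk (Ideal.span {x * y - z}) x ∈
      nonZeroDivisors (P ⧸ Ideal.span {x * y - z}) := by
  rw [mem_nonZeroDivisors_iff_right]
  intro b hb
  obtain ⟨f, rfl⟩ := Ideal.Quotient.mk_surjective b
  rw [← map_mul, Ideal.Quotient.eq_zero_iff_dvd] at hb
  rw [Ideal.Quotient.eq_zero_iff_dvd]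
  obtain ⟨g, hg⟩ := hb
  obtain ⟨k, rfl⟩ := hz g ⟨y * g - f, by linear_combination hg⟩
  refine ⟨k, sub_eq_zero.mp ((mul_left_mem_nonZeroDivisors_eq_zero_iff hx).mp ?_)⟩
  linear_combination hg

/-- If `y` is a nonzerodivisor modulo `x` and `z` is a nonzerodivisor modulo `(x, y)`, then `y` is
a nonzerodivisor modulo `(x * y - z, x)`. -/
lemma Ideal.Quotient.mk_mk_mem_nonZeroDivisors_of_mul_sub (hy : ∀ f, x ∣ y * f → x ∣ f)
    (hz : ∀ g, z * g ∈ Ideal.span {x, y} → g ∈ Ideal.span {x, y}) :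
    Ideal.Quotient.mk (Ideal.span {Ideal.Quotient.mk (Ideal.span {x * y - z}) x})
        (Ideal.Quotient.mk (Ideal.span {x * y - z}) y) ∈
      nonZeroDivisors ((P ⧸ Ideal.span {x * y - z}) ⧸
        Ideal.span {Ideal.Quotient.mk (Ideal.span {x * y - z}) x}) := by
  rw [mem_nonZeroDivisors_iff_right]
  intro b hb
  obtain ⟨b, rfl⟩ := Ideal.Quotient.mk_surjective b
  obtain ⟨f, rfl⟩ := Ideal.Quotient.mk_surjective b
  rw [← map_mul, Ideal.Quotient.eq_zero_iff_dvd] at hb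
  rw [Ideal.Quotient.eq_zero_iff_dvd]
  obtain ⟨c, hc⟩ := hb
  obtain ⟨g, rfl⟩ := Ideal.Quotient.mk_surjective c
  rw [← map_mul, ← map_mul, Ideal.Quotient.mk_eq_mk_iff_sub_mem,
    Ideal.mem_span_singleton] at hc
  obtain ⟨h, hh⟩ := hc
  obtain ⟨p, q, hpq⟩ := Ideal.mem_span_pair.mp <| hz h <|
    Ideal.mem_span_pair.mpr ⟨g + y * h, -f, by linear_combination -hh⟩
  obtain ⟨k, hk⟩ := hy (f + z * q) ⟨g + y * h - z * p, by
    linear_combination hh + z * hpq⟩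
  refine ⟨Ideal.Quotient.mk _ (k - y * q), ?_⟩
  rw [← map_mul, Ideal.Quotient.mk_eq_mk_iff_sub_mem, Ideal.mem_span_singleton]
  exact ⟨q, by linear_combination hk⟩

end QuotientByMulSub

/-- The evaluation `B → A/(z)` of `B = A[X,Y]/(XY - z)` at `X = Y = 0`. -/
noncomputable def reesEvalZero (A : Type) [CommRing A] (z : A) :
    ReesRing A z →ₐ[A] A ⧸ Ideal.span {z} :=
  Ideal.Quotient.liftₐ _ (MvPolynomial.aeval fun _ => 0) fun a ha => by
    obtain ⟨c, rfl⟩ := Ideal.mem_span_singleton.mp ha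
    simp [Ideal.Quotient.algebraMap_eq, Ideal.Quotient.mk_singleton_self]

lemma reesEvalZero_mk_X (A : Type) [CommRing A] (z : A) (i : Fin 2) :
    reesEvalZero A z (Ideal.Quotient.mk _ (MvPolynomial.X i)) = 0 :=
  MvPolynomial.aeval_X _ i

lemma reesX_mul_reesY (A : Type) [CommRing A] (z : A) :
    reesX A z * reesY A z = algebraMap A (ReesRing A z) z := by
  rw [reesX, reesY, ← map_mul, IsScalarTower.algebraMap_apply A (MvPolynomial (Fin 2) A)]
  exact Ideal.Quotient.eq.mpr (Ideal.mem_span_singleton_self _)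

/-- The isomorphism `B/(X,Y) ≃ A/(z)` for `B = A[X,Y]/(XY - z)`. -/
noncomputable def reesQuotientEquiv (A : Type) [CommRing A] (z : A) :
    (ReesRing A z ⧸ Ideal.span {reesX A z, reesY A z}) ≃ₐ[A] (A ⧸ Ideal.span {z}) :=
  AlgEquiv.ofAlgHom
    (Ideal.Quotient.liftₐ _ (reesEvalZero A z) fun a ha => by
      obtain ⟨p, q, rfl⟩ := Ideal.mem_span_pair.mp ha
      rw [map_add, map_mul, map_mul, reesX, reesY, reesEvalZero_mk_X, reesEvalZero_mk_X, mul_zero,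
        mul_zero, add_zero])
    (Ideal.Quotient.liftₐ _ (Algebra.ofId A _) fun a ha => by
      obtain ⟨c, rfl⟩ := Ideal.mem_span_singleton.mp ha
      refine Ideal.Quotient.eq_zero_iff_mem.mpr ?_
      rw [map_mul, ← reesX_mul_reesY, mul_assoc]
      exact Ideal.mul_mem_right _ _ (Ideal.subset_span (Set.mem_insert _ _)))
    (Ideal.Quotient.algHom_ext _ (Subsingleton.elim _ _))
    (Ideal.Quotient.algHom_ext _ <| Ideal.Quotient.algHom_ext _ <|
      MvPolynomial.algHom_ext fun i => by
        have hmem : Ideal.Quotient.mk _ (MvPolynomial.X i) ∈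
            Ideal.span {reesX A z, reesY A z} := by
          fin_cases i
          · exact Ideal.subset_span (Set.mem_insert _ _)
          · exact Ideal.subset_span (Set.mem_insert_of_mem _ rfl)
        simp [reesEvalZero, Ideal.Quotient.eq_zero_iff_mem.mpr hmem])

/-- **Regularity of the sequence `(X, Y)` in the Rees ring** (used for `Re(A,z)`):
for a nonzerodivisor `z` in `A` and `B = A[X,Y]/(XY - z)`: (1) the image of `X` in `B` is a
nonzerodivisor; (2) the pair `(X, Y)` is a weakly regular sequence on `B`, i.e. `X` is a
nonzerodivisor on `B` and `Y` is a nonzerodivisor on `B/(X)`; (3) `B/(X,Y) ≅ A/(z)` as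
`A`-algebras. -/
theorem statement14 {A : Type} [CommRing A] (z : A) (hz : z ∈ nonZeroDivisors A) :
    reesX A z ∈ nonZeroDivisors (ReesRing A z) ∧
      (reesX A z ∈ nonZeroDivisors (ReesRing A z) ∧
        Ideal.Quotient.mk (Ideal.span {reesX A z}) (reesY A z) ∈
          nonZeroDivisors (ReesRing A z ⧸ Ideal.span {reesX A z})) ∧
      Nonempty ((ReesRing A z ⧸ Ideal.span {reesX A z, reesY A z}) ≃ₐ[A]
        (A ⧸ Ideal.span {z})) := by
  have hX : reesX A z ∈ nonZeroDivisors (ReesRing A z) := by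
    refine Ideal.Quotient.mk_mem_nonZeroDivisors_of_mul_sub ?_ fun g hg => ?_
    · exact MvPolynomial.isRegular_X.mem_nonZeroDivisors
    · rw [← Ideal.mem_span_singleton, ← Set.image_singleton] at hg ⊢
      exact MvPolynomial.mem_span_X_image_of_C_mul_mem hz hg
  refine ⟨hX, ⟨hX, ?_⟩, ⟨reesQuotientEquiv A z⟩⟩
  refine Ideal.Quotient.mk_mk_mem_nonZeroDivisors_of_mul_sub
    (fun f => MvPolynomial.X_dvd_of_X_dvd_X_mul (by decide)) fun g hg => ?_
  rw [← Set.image_pair] at hg ⊢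
  exact MvPolynomial.mem_span_X_image_of_C_mul_mem hz hg
end
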